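/- arXiv:2003.05577 — 5 statements merged into one kernel-verified Lean document; each statement's English description precedes it below -/
import Mathlib

section
/- Assume F is algebraically closed and q is not a root of unity, and let d ≥ 0 be an even integer. Let OP_d be the set of quadruples (k0,k1,k2,k3) of nonzero elements of F satisfying k0 k1 k2 k3 = q^{-d-1} and k0^2 ≠ q^{-i}, k1^2 ≠ q^{-i}, k2^2 ≠ q^{-i}, k3^2 ≠ q^{-i} for all even i with 2 ≤ i ≤ d. Then: (1) for every (k0,k1,k2,k3) ∈ OP_d the representation O(k0,k1,k2,k3) is an irreducible (d+1)-dimensional representation of H_q; (2) every irreducible (d+1)-dimensional representation of H_q is isomorphic to O(k0,k1,k2,k3) for some (k0,k1,k2,k3) ∈ OP_d; (3) for (k0,k1,k2,k3), (k0',k1',k2',k3') ∈ OP_d, the representations O(k0,k1,k2,k3) and O(k0',k1',k2',k3') are isomorphic if and only if ki' = ki for i = 0,1,2,3. -/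
/-!
The proof rests on one construction and one computation of ranks.

*Chains.* If all `Tᵢ` satisfy `(Tᵢ - kᵢ)(Tᵢ - kᵢ⁻¹) = 0` (`Quad`) and `v` is a common eigenvector
of `T₀` and `T₃` with eigenvalues `k₀, k₃`, then applying `T₂` and `T₀` alternately to `v` and
rescaling gives vectors `w₀ = v, w₁, w₂, …` on which the `Tᵢ` act by the uniform formulas
of `Chain` (`chainSeq_chain`). Conversely these formulas on a spanning family imply `Quad`
(`Chain.quad`). The module `O(k₀,k₁,k₂,k₃)` is exactly a chain `e₀, …, e_d, 0, 0, …` ending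
at `d` (`IsO.chain`, `Chain.isO`).

*Ranks.* If such a `v` generates an `n`-dimensional module, then `w₀, …, w_{n-1}` is a basis in which
each `Tᵢ` is block triangular with blocks of size at most two. This fixes the rank of
`Tᵢ - kᵢ`, hence `det Tᵢ`, up to two possibilities for two of the indices (`Quad.ranks`).
Cyclically shifted versions and `det T₀ ⋯ det T₃ = q⁻ⁿ` remove the ambiguity.

*Irreducibility and uniqueness.* In a nonzero quotient of `O(k₀,k₁,k₂,k₃)` of dimension `n`, the
image of `e₀` is a generator which is a `(T₀,T₃)`-eigenvector, and, for parameters in `OP_d`, the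
image of `e_d` is a generator which is a `(T₃,T₂)`-eigenvector. Comparing the two rank counts
with the determinant identity forces `n = d + 1` and `det Tᵢ = kᵢ` (`Chain.dets`). So no proper
quotient exists, and `kᵢ = det Tᵢ` is an isomorphism invariant.

*Exhaustion.* On an irreducible module of dimension `2m + 1` each `Tᵢ + Tᵢ⁻¹` is a scalar
`kᵢ + kᵢ⁻¹`, and `kᵢ` can be chosen with `rank (Tᵢ - kᵢ) ≤ m` (`exists_quad`). Any two of the spaces
`ker (Tᵢ - kᵢ)` then meet nontrivially. The rank count gives `det Tᵢ = kᵢ`, hence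
`k₀k₁k₂k₃ = q^{-d-1}` (`Quad.rk_det`). If `k₀² = q^{-j}` for some even `j` with `2 ≤ j ≤ d`, then
`w_j` is a `T₀`-eigenvector for `k₀⁻¹`, so `det T₀ = k₀⁻¹`, which is absurd (`Quad.sq_ne`). Finally
`w_{d+1} = 0` (`chainSeq_eq_zero`), so the chain of `v` is the basis of an `O(k₀,k₁,k₂,k₃)`.
-/

universe u

namespace DAHA

variable {F : Type*} [Field F]

/-- A representation of the universal DAHA `H_q` of type `(C₁∨, C₁)` on `V`:
a quadruple of invertible operators (indexed by `ZMod 4`) such that each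
`Tᵢ + Tᵢ⁻¹` commutes with every `Tⱼ` and `T₀ T₁ T₂ T₃ = q⁻¹ • id`. -/
def IsRep {V : Type*} [AddCommGroup V] [Module F V] (q : F)
    (T : ZMod 4 → Module.End F V) : Prop :=
  (∀ i, IsUnit (T i)) ∧
  (∀ i j, Commute (T i + Ring.inverse (T i)) (T j)) ∧
  (T 0 * T 1 * T 2 * T 3 = q⁻¹ • (1 : Module.End F V))

/-- Irreducibility: `V ≠ 0` and the only invariant subspaces are `⊥` and `⊤`. -/
def Irred {V : Type*} [AddCommGroup V] [Module F V]
    (T : ZMod 4 → Module.End F V) : Prop :=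
  (∃ v : V, v ≠ 0) ∧
  ∀ W : Submodule F V, (∀ i, ∀ w ∈ W, T i w ∈ W) → W = ⊥ ∨ W = ⊤

/-- Isomorphism of two operator quadruples. -/
def Iso {V : Type*} {V' : Type*} [AddCommGroup V] [Module F V]
    [AddCommGroup V'] [Module F V']
    (T : ZMod 4 → Module.End F V) (T' : ZMod 4 → Module.End F V') : Prop :=
  ∃ S : V ≃ₗ[F] V', ∀ i v, S (T i v) = T' i (S v)

/-- The twist of an operator quadruple by `ε ∈ ℤ/4ℤ`. -/
def twist {V : Type*} [AddCommGroup V] [Module F V]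
    (T : ZMod 4 → Module.End F V) (ε : ZMod 4) : ZMod 4 → Module.End F V :=
  fun i => T (i + ε)

/-- The standard basis vectors `v_i` of `Fin (d+1) → F`, extended by `0` beyond index `d`. -/
noncomputable def e (F : Type*) [Field F] (d i : ℕ) : Fin (d + 1) → F :=
  if h : i < d + 1 then Pi.single (⟨i, h⟩ : Fin (d + 1)) (1 : F) else 0

/-- The basis vectors `m_i` of `ℕ →₀ F`. -/
noncomputable def mv (F : Type*) [Field F] (i : ℕ) : ℕ →₀ F := Finsupp.single i 1

/-- The defining action of the even-dimensional module `E(k₀,k₁,k₂,k₃)` (for `d` odd)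
on the basis `v_0, …, v_d` of `Fin (d+1) → F`. -/
def IsE (q k0 k1 k2 k3 : F) (d : ℕ)
    (T : ZMod 4 → Module.End F (Fin (d + 1) → F)) : Prop :=
  (∀ i : ℕ, Even i → 2 ≤ i → i ≤ d - 1 →
    T 0 (e F d i) = (k0⁻¹ * (q ^ i)⁻¹ * (1 - q ^ i) * (1 - k0 ^ 2 * q ^ i)) • e F d (i - 1)
      + (k0 + k0⁻¹ - k0⁻¹ * (q ^ i)⁻¹) • e F d i) ∧
  (∀ i : ℕ, Odd i → i ≤ d - 2 →
    T 0 (e F d i) = (k0⁻¹ * (q ^ (i + 1))⁻¹) • (e F d i - e F d (i + 1))) ∧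
  (T 0 (e F d 0) = k0 • e F d 0) ∧
  (T 0 (e F d d) = k0 • e F d d) ∧
  (∀ i : ℕ, Even i → 2 ≤ i → i ≤ d - 1 →
    T 1 (e F d i) = (-(k1 * (1 - q ^ i) * (1 - k0 ^ 2 * q ^ i))) • e F d (i - 1)
      + k1 • e F d i + k1⁻¹ • e F d (i + 1)) ∧
  (∀ i : ℕ, Odd i → i ≤ d → T 1 (e F d i) = k1⁻¹ • e F d i) ∧
  (T 1 (e F d 0) = k1 • e F d 0 + k1⁻¹ • e F d 1) ∧
  (∀ i : ℕ, Even i → i ≤ d - 1 →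
    T 2 (e F d i) = (k0⁻¹ * k1⁻¹ * k3⁻¹ * (q ^ (i + 1))⁻¹) • (e F d i - e F d (i + 1))) ∧
  (∀ i : ℕ, Odd i → i ≤ d →
    T 2 (e F d i) = ((k0 * k1 * k3 * q ^ i)⁻¹ * (k0 * k1 * k3 * q ^ i - k2)
        * (k0 * k1 * k3 * q ^ i - k2⁻¹)) • e F d (i - 1)
      + (k2 + k2⁻¹ - k0⁻¹ * k1⁻¹ * k3⁻¹ * (q ^ i)⁻¹) • e F d i) ∧
  (∀ i : ℕ, Even i → i ≤ d - 1 → T 3 (e F d i) = k3 • e F d i) ∧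
  (∀ i : ℕ, Odd i → i ≤ d - 2 →
    T 3 (e F d i) = (-(k3⁻¹ * (k0 * k1 * k3 * q ^ i - k2)
        * (k0 * k1 * k3 * q ^ i - k2⁻¹))) • e F d (i - 1)
      + k3⁻¹ • e F d i + k3 • e F d (i + 1)) ∧
  (T 3 (e F d d) = (-(k3⁻¹ * (k0 * k1 * k3 * q ^ d - k2)
        * (k0 * k1 * k3 * q ^ d - k2⁻¹))) • e F d (d - 1)
      + k3⁻¹ • e F d d)

/-- The defining action of the odd-dimensional module `O(k₀,k₁,k₂,k₃)` (for `d` even)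
on the basis `v_0, …, v_d` of `Fin (d+1) → F`. -/
def IsO (q k0 k1 k2 k3 : F) (d : ℕ)
    (T : ZMod 4 → Module.End F (Fin (d + 1) → F)) : Prop :=
  (∀ i : ℕ, Even i → 2 ≤ i → i ≤ d →
    T 0 (e F d i) = (k0⁻¹ * (q ^ i)⁻¹ * (1 - q ^ i) * (1 - k0 ^ 2 * q ^ i)) • e F d (i - 1)
      + (k0 + k0⁻¹ - k0⁻¹ * (q ^ i)⁻¹) • e F d i) ∧
  (∀ i : ℕ, Odd i → i ≤ d - 1 →
    T 0 (e F d i) = (k0⁻¹ * (q ^ (i + 1))⁻¹) • (e F d i - e F d (i + 1))) ∧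
  (T 0 (e F d 0) = k0 • e F d 0) ∧
  (∀ i : ℕ, Even i → 2 ≤ i → i ≤ d - 2 →
    T 1 (e F d i) = (-(k1 * (1 - q ^ i) * (1 - k0 ^ 2 * q ^ i))) • e F d (i - 1)
      + k1 • e F d i + k1⁻¹ • e F d (i + 1)) ∧
  (∀ i : ℕ, Odd i → i ≤ d - 1 → T 1 (e F d i) = k1⁻¹ • e F d i) ∧
  (T 1 (e F d 0) = k1 • e F d 0 + k1⁻¹ • e F d 1) ∧
  (T 1 (e F d d) = (-(k1 * (1 - q ^ d) * (1 - k0 ^ 2 * q ^ d))) • e F d (d - 1) + k1 • e F d d) ∧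
  (∀ i : ℕ, Even i → i ≤ d - 2 →
    T 2 (e F d i) = (k2 * q ^ (d - i)) • (e F d i - e F d (i + 1))) ∧
  (∀ i : ℕ, Odd i → i ≤ d - 1 →
    T 2 (e F d i) = (-(k2 * (1 - (k2 ^ 2)⁻¹ * (q ^ (d + 1 - i))⁻¹) * (1 - q ^ (d - i + 1)))) • e F d (i - 1)
      + (k2 + k2⁻¹ - k2 * q ^ (d - i + 1)) • e F d i) ∧
  (T 2 (e F d d) = k2 • e F d d) ∧
  (∀ i : ℕ, Even i → i ≤ d → T 3 (e F d i) = k3 • e F d i) ∧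
  (∀ i : ℕ, Odd i → i ≤ d - 1 →
    T 3 (e F d i) = (-(k3⁻¹ * (1 - (k2 ^ 2)⁻¹ * (q ^ (d + 1 - i))⁻¹)
        * (1 - (q ^ (d + 1 - i))⁻¹))) • e F d (i - 1)
      + k3⁻¹ • e F d i + k3 • e F d (i + 1))

/-- The defining action of the infinite-dimensional module `M(k₀,k₁,k₂,k₃)`
on the basis `m_0, m_1, …` of `ℕ →₀ F`. -/
def IsM (q k0 k1 k2 k3 : F) (T : ZMod 4 → Module.End F (ℕ →₀ F)) : Prop :=
  (∀ i : ℕ, Even i → 2 ≤ i →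
    T 0 (mv F i) = (k0⁻¹ * (q ^ i)⁻¹ * (1 - q ^ i) * (1 - k0 ^ 2 * q ^ i)) • mv F (i - 1)
      + (k0 + k0⁻¹ - k0⁻¹ * (q ^ i)⁻¹) • mv F i) ∧
  (∀ i : ℕ, Odd i →
    T 0 (mv F i) = (k0⁻¹ * (q ^ (i + 1))⁻¹) • (mv F i - mv F (i + 1))) ∧
  (T 0 (mv F 0) = k0 • mv F 0) ∧
  (∀ i : ℕ, Even i → 2 ≤ i →
    T 1 (mv F i) = (-(k1 * (1 - q ^ i) * (1 - k0 ^ 2 * q ^ i))) • mv F (i - 1)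
      + k1 • mv F i + k1⁻¹ • mv F (i + 1)) ∧
  (∀ i : ℕ, Odd i → T 1 (mv F i) = k1⁻¹ • mv F i) ∧
  (T 1 (mv F 0) = k1 • mv F 0 + k1⁻¹ • mv F 1) ∧
  (∀ i : ℕ, Even i →
    T 2 (mv F i) = (k0⁻¹ * k1⁻¹ * k3⁻¹ * (q ^ (i + 1))⁻¹) • (mv F i - mv F (i + 1))) ∧
  (∀ i : ℕ, Odd i →
    T 2 (mv F i) = ((k0 * k1 * k3 * q ^ i)⁻¹ * (k0 * k1 * k3 * q ^ i - k2)
        * (k0 * k1 * k3 * q ^ i - k2⁻¹)) • mv F (i - 1)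
      + (k2 + k2⁻¹ - k0⁻¹ * k1⁻¹ * k3⁻¹ * (q ^ i)⁻¹) • mv F i) ∧
  (∀ i : ℕ, Even i → T 3 (mv F i) = k3 • mv F i) ∧
  (∀ i : ℕ, Odd i →
    T 3 (mv F i) = (-(k3⁻¹ * (k0 * k1 * k3 * q ^ i - k2)
        * (k0 * k1 * k3 * q ^ i - k2⁻¹))) • mv F (i - 1)
      + k3⁻¹ • mv F i + k3 • mv F (i + 1))


/-- Membership in the parameter set `OP_d`. -/
def OPmem (q : F) (d : ℕ) (k0 k1 k2 k3 : F) : Prop :=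
  k0 ≠ 0 ∧ k1 ≠ 0 ∧ k2 ≠ 0 ∧ k3 ≠ 0 ∧ k0 * k1 * k2 * k3 = (q ^ (d + 1))⁻¹ ∧
  ∀ i : ℕ, Even i → 2 ≤ i → i ≤ d →
    k0 ^ 2 ≠ (q ^ i)⁻¹ ∧ k1 ^ 2 ≠ (q ^ i)⁻¹ ∧ k2 ^ 2 ≠ (q ^ i)⁻¹ ∧ k3 ^ 2 ≠ (q ^ i)⁻¹

section

/-! ### Operators with quadratic relations and chains -/

variable {N : Type*} [AddCommGroup N] [Module F N]

/-- The relations of `H_q` in a module on which each `Tᵢ + Tᵢ⁻¹` is the scalar `kᵢ + kᵢ⁻¹`. The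
relation `Tᵢ + Tᵢ⁻¹ = kᵢ + kᵢ⁻¹` is written without inverses, and the product relation is recorded in
all its four cyclic forms, so that the notion is stable under `twist`. -/
structure Quad (q : F) (k : ZMod 4 → F) (T : ZMod 4 → Module.End F N) : Prop where
  ne : ∀ i, k i ≠ 0
  quad : ∀ i x, T i (T i x) = (k i + (k i)⁻¹) • T i x - x
  prod : ∀ i x, T i (T (i + 1) (T (i + 2) (T (i + 3) x))) = q⁻¹ • x

/-- The sequence `v₀, v₁, …` is acted on by the operators through the formulas of the
infinite-dimensional module `M(k₀,k₁,k₂,k₃)`. The terms with `v (i - 1)` at `i = 0` are harmless,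
because `i` is then even and the coefficient contains `1 - q ^ 0 = 0`. -/
structure Chain (q k0 k1 k2 k3 : F) (T : ZMod 4 → Module.End F N) (v : ℕ → N) : Prop where
  t0e : ∀ i, Even i → T 0 (v i) =
    (k0⁻¹ * (q ^ i)⁻¹ * (1 - q ^ i) * (1 - k0 ^ 2 * q ^ i)) • v (i - 1)
      + (k0 + k0⁻¹ - k0⁻¹ * (q ^ i)⁻¹) • v i
  t0o : ∀ i, Odd i → T 0 (v i) = (k0⁻¹ * (q ^ i * q)⁻¹) • (v i - v (i + 1))
  t1e : ∀ i, Even i → T 1 (v i) = (-(k1 * (1 - q ^ i) * (1 - k0 ^ 2 * q ^ i))) • v (i - 1)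
      + k1 • v i + k1⁻¹ • v (i + 1)
  t1o : ∀ i, Odd i → T 1 (v i) = k1⁻¹ • v i
  t2e : ∀ i, Even i → T 2 (v i) = (k0⁻¹ * k1⁻¹ * k3⁻¹ * (q ^ i * q)⁻¹) • (v i - v (i + 1))
  t2o : ∀ i, Odd i → T 2 (v i) = ((k0 * k1 * k3 * q ^ i)⁻¹ * (k0 * k1 * k3 * q ^ i - k2)
        * (k0 * k1 * k3 * q ^ i - k2⁻¹)) • v (i - 1)
      + (k2 + k2⁻¹ - (k0 * k1 * k3 * q ^ i)⁻¹) • v i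
  t3e : ∀ i, Even i → T 3 (v i) = k3 • v i
  t3o : ∀ i, Odd i → T 3 (v i) = (-(k3⁻¹ * (k0 * k1 * k3 * q ^ i - k2)
        * (k0 * k1 * k3 * q ^ i - k2⁻¹))) • v (i - 1)
      + k3⁻¹ • v i + k3 • v (i + 1)

theorem Quad.twist {q : F} {k : ZMod 4 → F} {T : ZMod 4 → Module.End F N} (h : Quad q k T)
    (ε : ZMod 4) : Quad q (fun i => k (i + ε)) (twist T ε) where
  ne i := h.ne _
  quad i x := h.quad _ x
  prod i x := by
    have := h.prod (i + ε) x
    simpa only [DAHA.twist, add_right_comm] using this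

theorem Quad.inv_apply {q : F} {k : ZMod 4 → F} {T : ZMod 4 → Module.End F N} (h : Quad q k T)
    {i : ZMod 4} {x y : N} (hxy : T i x = y) : x = (k i + (k i)⁻¹) • y - T i y := by
  subst hxy; rw [h.quad]; abel

/-- Inductive step of `chainSeq_chain` from an even index: with `x = wᵢ`, `y = wᵢ₋₁`, `z = wᵢ₊₁` and
`Q = q ^ i`, the formula for `T₁ x` and the eigenvector property of `z` follow from
`T₀ T₁ T₂ T₃ = q⁻¹`. The factor `1 - Q` in `h1` is there because no `y` exists when `i = 0`. -/
theorem step_even {q : F} (hq : q ≠ 0) {k : ZMod 4 → F} {T : ZMod 4 → Module.End F N}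
    (h : Quad q k T) {x y z : N} {Q : F} (hQ : Q ≠ 0) (h3 : T 3 x = k 3 • x)
    (h0 : T 0 x = ((k 0)⁻¹ * Q⁻¹ * (1 - Q) * (1 - k 0 ^ 2 * Q)) • y
      + (k 0 + (k 0)⁻¹ - (k 0)⁻¹ * Q⁻¹) • x)
    (h2 : T 2 x = ((k 0)⁻¹ * (k 1)⁻¹ * (k 3)⁻¹ * (Q * q)⁻¹) • (x - z))
    (h1 : (1 - Q) • T 1 y = (1 - Q) • (k 1)⁻¹ • y) :
    T 1 x = (-(k 1 * (1 - Q) * (1 - k 0 ^ 2 * Q))) • y + k 1 • x + (k 1)⁻¹ • z ∧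
      T 1 z = (k 1)⁻¹ • z := by
  have n0 := h.ne 0
  have n1 := h.ne 1
  have n3 := h.ne 3
  have hp : T 0 (T 1 (T 2 (T 3 x))) = q⁻¹ • x := h.prod 0 x
  have hA := h.inv_apply hp
  rw [h3, map_smul, map_smul, h2, map_smul, map_smul, h0] at hA
  have hR : T 1 (x - z) = k 1 • x - (k 1 * (1 - Q) * (1 - k 0 ^ 2 * Q)) • y := by
    have := congrArg (fun w => (k 0 * k 1 * Q * q) • w) hA
    simp only [smul_smul] at this
    rw [show k 0 * k 1 * Q * q * (k 3 * ((k 0)⁻¹ * (k 1)⁻¹ * (k 3)⁻¹ * (Q * q)⁻¹)) = 1 by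
      field_simp, one_smul] at this
    rw [this]
    match_scalars <;> field_simp <;> ring
  have hT := h.inv_apply hR
  have hx : T 1 x = (-(k 1 * (1 - Q) * (1 - k 0 ^ 2 * Q))) • y + k 1 • x + (k 1)⁻¹ • z := by
    have h1' : (k 1 * (1 - Q) * (1 - k 0 ^ 2 * Q)) • T 1 y =
        (k 1 * (1 - k 0 ^ 2 * Q)) • (1 - Q) • (k 1)⁻¹ • y := by
      rw [← h1]; module
    rw [map_sub, map_smul, map_smul, h1'] at hT
    have h5 : k 1 • T 1 x = (k 1 + (k 1)⁻¹) • (k 1 • x - (k 1 * (1 - Q) * (1 - k 0 ^ 2 * Q)) • y)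
       + (k 1 * (1 - k 0 ^ 2 * Q)) • (1 - Q) • (k 1)⁻¹ • y - (x - z) := by
      linear_combination (norm := module) hT
    have := congrArg (fun w => (k 1)⁻¹ • w) h5
    simp only [smul_smul, inv_mul_cancel₀ n1, one_smul] at this
    rw [this]
    match_scalars <;> field_simp <;> ring
  refine ⟨hx, ?_⟩
  have : T 1 z = T 1 x - T 1 (x - z) := by rw [map_sub]; abel
  rw [this, hR, hx]
  module

/-- Inductive step of `chainSeq_chain` from an odd index, using `T₂ T₃ T₀ T₁ = q⁻¹`; the vectors are as
in `step_even`. -/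
theorem step_odd {q : F} (hq : q ≠ 0) {k : ZMod 4 → F} {T : ZMod 4 → Module.End F N}
    (h : Quad q k T) {x y z : N} {Q : F} (hQ : Q ≠ 0) (h1 : T 1 x = (k 1)⁻¹ • x)
    (h0 : T 0 x = ((k 0)⁻¹ * (Q * q)⁻¹) • (x - z))
    (h2 : T 2 x = ((k 0 * k 1 * k 3 * Q)⁻¹ * (k 0 * k 1 * k 3 * Q - k 2)
        * (k 0 * k 1 * k 3 * Q - (k 2)⁻¹)) • y + (k 2 + (k 2)⁻¹ - (k 0 * k 1 * k 3 * Q)⁻¹) • x)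
    (h3 : T 3 y = k 3 • y) :
    T 3 x = (-((k 3)⁻¹ * (k 0 * k 1 * k 3 * Q - k 2) * (k 0 * k 1 * k 3 * Q - (k 2)⁻¹))) • y
      + (k 3)⁻¹ • x + k 3 • z ∧ T 3 z = k 3 • z := by
  have n0 := h.ne 0
  have n1 := h.ne 1
  have n2 := h.ne 2
  have n3 := h.ne 3
  have hp : T 2 (T 3 (T 0 (T 1 x))) = q⁻¹ • x := h.prod 2 x
  have hA := h.inv_apply hp
  rw [h1, map_smul, map_smul, h0, map_smul, map_smul, h2] at hA
  set B := (k 0 * k 1 * k 3 * Q - k 2) * (k 0 * k 1 * k 3 * Q - (k 2)⁻¹) with hB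
  have hR : T 3 (x - z) = (k 3)⁻¹ • x - ((k 3)⁻¹ * B) • y := by
    have := congrArg (fun w => (k 0 * k 1 * Q * q) • w) hA
    simp only [smul_smul] at this
    rw [show k 0 * k 1 * Q * q * ((k 1)⁻¹ * ((k 0)⁻¹ * (Q * q)⁻¹)) = 1 by
      field_simp, one_smul] at this
    rw [this, hB]
    match_scalars <;> field_simp <;> ring
  have hT := h.inv_apply hR
  have hx : T 3 x = (-((k 3)⁻¹ * B)) • y + (k 3)⁻¹ • x + k 3 • z := by
    rw [map_sub, map_smul, map_smul, h3] at hT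
    have h5 : (k 3)⁻¹ • T 3 x = (k 3 + (k 3)⁻¹) • ((k 3)⁻¹ • x - ((k 3)⁻¹ * B) • y)
       + ((k 3)⁻¹ * B) • k 3 • y - (x - z) := by
      linear_combination (norm := module) hT
    have := congrArg (fun w => (k 3) • w) h5
    simp only [smul_smul, mul_inv_cancel₀ n3, one_smul] at this
    rw [this]
    match_scalars <;> field_simp <;> ring
  refine ⟨by rw [hx, hB, ← mul_assoc], ?_⟩
  have : T 3 z = T 3 x - T 3 (x - z) := by rw [map_sub]; abel
  rw [this, hR, hx]
  module

/-- The chain starting at `v`. The recursion solves the formulas of `Chain` for `T₂ wᵢ` (`i` even)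
and `T₀ wᵢ` (`i` odd) for `wᵢ₊₁`. -/
noncomputable def chainSeq (q : F) (k : ZMod 4 → F) (T : ZMod 4 → Module.End F N) (v : N) : ℕ → N
  | 0 => v
  | i + 1 => if Even i then chainSeq q k T v i - (k 0 * k 1 * k 3 * (q ^ i * q)) • T 2 (chainSeq q k T v i)
      else chainSeq q k T v i - (k 0 * (q ^ i * q)) • T 0 (chainSeq q k T v i)

/-- A common eigenvector of `T₀` and `T₃` starts a chain. -/
theorem chainSeq_chain {q : F} (hq : q ≠ 0) {k : ZMod 4 → F} {T : ZMod 4 → Module.End F N}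
    (h : Quad q k T) {v : N} (h0 : T 0 v = k 0 • v) (h3 : T 3 v = k 3 • v) :
    Chain q (k 0) (k 1) (k 2) (k 3) T (chainSeq q k T v) := by
  have n0 := h.ne 0
  have n1 := h.ne 1
  have n2 := h.ne 2
  have n3 := h.ne 3
  set w := chainSeq q k T v with hw
  have hwe : ∀ i, Even i → w (i + 1) = w i - (k 0 * k 1 * k 3 * (q ^ i * q)) • T 2 (w i) := by
    intro i hi; rw [hw, chainSeq, if_pos hi]
  have hwo : ∀ i, Odd i → w (i + 1) = w i - (k 0 * (q ^ i * q)) • T 0 (w i) := by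
    intro i hi; rw [hw, chainSeq, if_neg (Nat.not_even_iff_odd.2 hi)]
  have t0o : ∀ i, Odd i → T 0 (w i) = ((k 0)⁻¹ * (q ^ i * q)⁻¹) • (w i - w (i + 1)) := by
    intro i hi
    rw [hwo i hi]
    match_scalars <;> field_simp <;> ring
  have t2e : ∀ i, Even i →
      T 2 (w i) = ((k 0)⁻¹ * (k 1)⁻¹ * (k 3)⁻¹ * (q ^ i * q)⁻¹) • (w i - w (i + 1)) := by
    intro i hi
    rw [hwe i hi]
    match_scalars <;> field_simp <;> ring
  have t0e : ∀ i, Even i → T 0 (w i) =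
    ((k 0)⁻¹ * (q ^ i)⁻¹ * (1 - q ^ i) * (1 - k 0 ^ 2 * q ^ i)) • w (i - 1)
      + (k 0 + (k 0)⁻¹ - (k 0)⁻¹ * (q ^ i)⁻¹) • w i := by
    intro i hi
    rcases i with _ | i
    · simp [hw, chainSeq, h0]
    · have hi' : Odd i := by grind
      rw [hwo i hi', map_sub, map_smul, h.quad, Nat.add_sub_cancel]
      match_scalars <;> field_simp <;> ring
  have t2o : ∀ i, Odd i → T 2 (w i) =
      ((k 0 * k 1 * k 3 * q ^ i)⁻¹ * (k 0 * k 1 * k 3 * q ^ i - k 2)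
        * (k 0 * k 1 * k 3 * q ^ i - (k 2)⁻¹)) • w (i - 1)
      + (k 2 + (k 2)⁻¹ - (k 0 * k 1 * k 3 * q ^ i)⁻¹) • w i := by
    intro i hi
    rcases i with _ | i
    · simp at hi
    · have hi' : Even i := by grind
      rw [hwe i hi', map_sub, map_smul, h.quad, Nat.add_sub_cancel]
      match_scalars <;> field_simp <;> ring
  have key : ∀ i, (Even i → T 3 (w i) = k 3 • w i ∧ (1 - q ^ i) • T 1 (w (i - 1)) =
        (1 - q ^ i) • (k 1)⁻¹ • w (i - 1)) ∧
      (Odd i → T 1 (w i) = (k 1)⁻¹ • w i ∧ T 3 (w (i - 1)) = k 3 • w (i - 1)) := by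
    intro i
    induction i with
    | zero => simp [hw, chainSeq, h3]
    | succ i ih =>
      refine ⟨fun hi => ?_, fun hi => ?_⟩
      · have hi' : Odd i := by grind
        obtain ⟨a, b⟩ := ih.2 hi'
        have := step_odd hq h (pow_ne_zero i hq) a (t0o i hi') (t2o i hi') b
        rw [Nat.add_sub_cancel]
        exact ⟨this.2, by rw [a]⟩
      · have hi' : Even i := by grind
        obtain ⟨a, b⟩ := ih.1 hi'
        have := step_even hq h (pow_ne_zero i hq) a (t0e i hi') (t2e i hi') b
        rw [Nat.add_sub_cancel]
        exact ⟨this.2, a⟩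
  exact
    { t0e := t0e
      t0o := t0o
      t1e := fun i hi => (step_even hq h (pow_ne_zero i hq) ((key i).1 hi).1 (t0e i hi) (t2e i hi)
        ((key i).1 hi).2).1
      t1o := fun i hi => ((key i).2 hi).1
      t2e := t2e
      t2o := t2o
      t3e := fun i hi => ((key i).1 hi).1
      t3o := fun i hi => (step_odd hq h (pow_ne_zero i hq) ((key i).2 hi).1 (t0o i hi) (t2o i hi)
        ((key i).2 hi).2).1 }

/-- The formulas of `Chain` on a spanning family imply the relations of `H_q`. -/
theorem Chain.quad {q : F} (hq : q ≠ 0) {k : ZMod 4 → F} (hk : ∀ i, k i ≠ 0)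
    {T : ZMod 4 → Module.End F N} {v : ℕ → N}
    (h : Chain q (k 0) (k 1) (k 2) (k 3) T v)
    (hspan : Submodule.span F (Set.range v) = ⊤) : Quad q k T := by
  have n0 := hk 0
  have n1 := hk 1
  have n2 := hk 2
  have n3 := hk 3
  have hquad : ∀ i x, T i (T i x) = (k i + (k i)⁻¹) • T i x - x := by
    intro i x
    have : T i ∘ₗ T i = (k i + (k i)⁻¹) • T i - LinearMap.id := by
      refine LinearMap.ext_on_range hspan fun j => ?_
      simp only [LinearMap.comp_apply, LinearMap.sub_apply, LinearMap.smul_apply, LinearMap.id_apply]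
      have hQ : q ^ j ≠ 0 := pow_ne_zero j hq
      rcases Nat.even_or_odd j with hj | hj
      · rcases j with _ | j
        · have e0 := h.t0e 0 hj
          have e1 := h.t1e 0 hj
          have e2 := h.t2e 0 hj
          have o1 := h.t1o 1 odd_one
          have o2 := h.t2o 1 odd_one
          have e3 := h.t3e 0 hj
          simp at e0 e1 e2 o1 o2 e3
          fin_cases i
          · change T 0 (T 0 _) = (k 0 + (k 0)⁻¹) • T 0 _ - _
            simp only [e0, map_smul]; match_scalars; field_simp; ring
          · change T 1 (T 1 _) = (k 1 + (k 1)⁻¹) • T 1 _ - _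
            simp only [e1, map_smul, map_add, o1]; match_scalars <;> field_simp; ring
          · change T 2 (T 2 _) = (k 2 + (k 2)⁻¹) • T 2 _ - _
            simp only [e2, map_smul, map_sub, o2]; match_scalars <;> field_simp <;> ring
          · change T 3 (T 3 _) = (k 3 + (k 3)⁻¹) • T 3 _ - _
            simp only [e3, map_smul]; match_scalars; field_simp; ring
        · have hjo : Odd j := by grind
          have hjo2 : Odd (j + 1 + 1) := by grind
          have e0 := h.t0e (j + 1) hj
          have e1 := h.t1e (j + 1) hj
          have e2 := h.t2e (j + 1) hj
          have o0 := h.t0o j hjo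
          have o1 := h.t1o j hjo
          have o1' := h.t1o (j + 1 + 1) hjo2
          have o2 := h.t2o (j + 1 + 1) hjo2
          have e3 := h.t3e (j + 1) hj
          simp only [Nat.add_sub_cancel] at *
          have hQ' : q ^ j ≠ 0 := pow_ne_zero j hq
          fin_cases i
          · change T 0 (T 0 _) = (k 0 + (k 0)⁻¹) • T 0 _ - _
            simp only [e0, map_smul, map_add, o0]; match_scalars <;> field_simp <;> ring
          · change T 1 (T 1 _) = (k 1 + (k 1)⁻¹) • T 1 _ - _
            simp only [e1, map_smul, map_add, o1, o1']; match_scalars <;> field_simp <;> ring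
          · change T 2 (T 2 _) = (k 2 + (k 2)⁻¹) • T 2 _ - _
            simp only [e2, map_smul, map_sub, o2]; match_scalars <;> field_simp <;> ring
          · change T 3 (T 3 _) = (k 3 + (k 3)⁻¹) • T 3 _ - _
            simp only [e3, map_smul]; match_scalars <;> field_simp; ring
      · rcases j with _ | j
        · simp at hj
        have hje : Even j := by grind
        have hje2 : Even (j + 1 + 1) := by grind
        have o0 := h.t0o (j + 1) hj
        have e0 := h.t0e (j + 1 + 1) hje2
        have o1 := h.t1o (j + 1) hj
        have o2 := h.t2o (j + 1) hj
        have e2 := h.t2e j hje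
        have o3 := h.t3o (j + 1) hj
        have e3 := h.t3e j hje
        have e3' := h.t3e (j + 1 + 1) hje2
        simp only [Nat.add_sub_cancel] at *
        have hQ' : q ^ j ≠ 0 := pow_ne_zero j hq
        fin_cases i
        · change T 0 (T 0 _) = (k 0 + (k 0)⁻¹) • T 0 _ - _
          simp only [o0, map_smul, map_sub, e0]; match_scalars <;> field_simp <;> ring
        · change T 1 (T 1 _) = (k 1 + (k 1)⁻¹) • T 1 _ - _
          simp only [map_smul, o1]; match_scalars; field_simp; ring
        · change T 2 (T 2 _) = (k 2 + (k 2)⁻¹) • T 2 _ - _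
          simp only [e2, map_smul, map_add, o2]; match_scalars <;> field_simp <;> ring
        · change T 3 (T 3 _) = (k 3 + (k 3)⁻¹) • T 3 _ - _
          simp only [o3, e3, e3', map_add, map_smul]; match_scalars <;> field_simp <;> ring
    simpa using LinearMap.congr_fun this x
  have hinj : ∀ i x y, T i x = T i y → x = y := by
    intro i x y hxy
    have a := hquad i x
    rw [hxy, hquad i y] at a
    simpa using a.symm
  have hrot : ∀ i, (∀ x, T i (T (i + 1) (T (i + 2) (T (i + 3) x))) = q⁻¹ • x) →
      ∀ x, T (i + 1) (T (i + 1 + 1) (T (i + 1 + 2) (T (i + 1 + 3) x))) = q⁻¹ • x := by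
    intro i hi x
    have h4 : i + 1 + 3 = i := by rw [add_assoc]; exact add_zero i
    rw [h4, add_assoc i 1 1, add_assoc i 1 2]
    apply hinj i
    rw [map_smul]
    exact hi (T i x)
  have h12 : T 1 ∘ₗ T 2 = q⁻¹ • (((k 0 + (k 0)⁻¹) • LinearMap.id - T 0) ∘ₗ
      ((k 3 + (k 3)⁻¹) • LinearMap.id - T 3)) := by
    refine LinearMap.ext_on_range hspan fun j => ?_
    simp only [LinearMap.comp_apply, LinearMap.sub_apply, LinearMap.smul_apply, LinearMap.id_apply]
    rcases Nat.even_or_odd j with hj | hj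
    · have hQ' : q ^ j ≠ 0 := pow_ne_zero j hq
      rw [h.t2e j hj, h.t3e j hj]
      simp only [map_smul, map_sub, h.t1e j hj, h.t1o (j + 1) hj.add_one, h.t0e j hj]
      match_scalars <;> field_simp <;> ring
    · rcases j with _ | j
      · simp at hj
      have hje : Even j := by grind
      have hje2 : Even (j + 1 + 1) := by grind
      have hQ' : q ^ j ≠ 0 := pow_ne_zero j hq
      have e0 := h.t0e (j + 1 + 1) hje2
      have o2 := h.t2o (j + 1) hj
      have o3 := h.t3o (j + 1) hj
      simp only [Nat.add_sub_cancel] at *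
      rw [o2, o3]
      simp only [map_smul, map_sub, map_add, h.t1e j hje, h.t1o (j + 1) hj, h.t0e j hje,
        h.t0o (j + 1) hj, e0]
      match_scalars <;> field_simp <;> ring
  have hp3 : ∀ x, T 3 (T (3 + 1) (T (3 + 2) (T (3 + 3) x))) = q⁻¹ • x := by
    intro x
    change T 3 (T 0 (T 1 (T 2 x))) = q⁻¹ • x
    have := LinearMap.congr_fun h12 x
    simp only [LinearMap.comp_apply, LinearMap.sub_apply, LinearMap.smul_apply,
      LinearMap.id_apply] at this
    rw [this]
    simp only [map_smul, map_sub, hquad]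
    module
  have hp0 := hrot 3 hp3
  have hp1 := hrot _ hp0
  have hp2 := hrot _ hp1
  refine ⟨hk, hquad, fun i => ?_⟩
  fin_cases i
  exacts [hp0, hp1, hp2, hp3]

/-! ### Initial spans of a chain -/

theorem zmod4_forall {P : ZMod 4 → Prop} (h0 : P 0) (h1 : P 1) (h2 : P 2) (h3 : P 3) (i : ZMod 4) :
    P i := by
  fin_cases i
  exacts [h0, h1, h2, h3]

/-- The span of the first `j` vectors `v₀, …, v_{j-1}`. -/
def initSpan (F : Type*) [Field F] {N : Type*} [AddCommGroup N] [Module F N] (v : ℕ → N) (j : ℕ) :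
    Submodule F N :=
  Submodule.span F (v '' Set.Iio j)

theorem mem_initSpan {v : ℕ → N} {i j : ℕ} (h : i < j) : v i ∈ initSpan F v j :=
  Submodule.subset_span ⟨i, h, rfl⟩

theorem initSpan_zero (v : ℕ → N) : initSpan F v 0 = ⊥ := by
  simp [initSpan]

theorem initSpan_succ (v : ℕ → N) (j : ℕ) :
    initSpan F v (j + 1) = initSpan F v j ⊔ Submodule.span F {v j} := by
  rw [initSpan, initSpan, ← Submodule.span_union]
  congr 1
  ext x
  simp only [Set.mem_image, Set.mem_Iio, Set.mem_union, Set.mem_singleton_iff, Nat.lt_succ_iff_lt_or_eq]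
  constructor
  · rintro ⟨i, hi | rfl, rfl⟩
    exacts [Or.inl ⟨i, hi, rfl⟩, Or.inr rfl]
  · rintro (⟨i, hi, rfl⟩ | rfl)
    exacts [⟨i, Or.inl hi, rfl⟩, ⟨j, Or.inr rfl, rfl⟩]

theorem initSpan_mono (v : ℕ → N) {i j : ℕ} (h : i ≤ j) : initSpan F v i ≤ initSpan F v j :=
  Submodule.span_mono (Set.image_mono (Set.Iio_subset_Iio h))

theorem finrank_initSpan [FiniteDimensional F N] {v : ℕ → N} {n : ℕ}
    (h : ∀ j < n, v j ∉ initSpan F v j) : Module.finrank F (initSpan F v n) = n := by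
  induction n with
  | zero => rw [initSpan_zero]; simp
  | succ n ih =>
    rw [initSpan_succ, Submodule.finrank_sup_span_singleton (h n n.lt_succ_self),
      ih fun j hj => h j (hj.trans n.lt_succ_self)]

/-- Once a chain vector depends on the preceding ones, their span is invariant. -/
theorem Chain.initSpan_invariant {q k0 k1 k2 k3 : F} {T : ZMod 4 → Module.End F N} {v : ℕ → N}
    (h : Chain q k0 k1 k2 k3 T v) {n : ℕ} (hn : v n ∈ initSpan F v n) (i : ZMod 4) :
    ∀ x ∈ initSpan F v n, T i x ∈ initSpan F v n := by
  have hm : ∀ j ≤ n, v j ∈ initSpan F v n := by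
    intro j hj
    rcases hj.lt_or_eq with hj | rfl
    exacts [mem_initSpan hj, hn]
  intro x hx
  refine Submodule.span_induction (p := fun x _ => T i x ∈ initSpan F v n) ?_ ?_ ?_ ?_ hx
  · rintro _ ⟨j, hj, rfl⟩
    have hj : j < n := hj
    have ha := hm (j - 1) (by omega)
    have hb := hm j (by omega)
    have hc := hm (j + 1) (by omega)
    rcases Nat.even_or_odd j with hp | hp
    · refine zmod4_forall (P := fun i => T i (v j) ∈ initSpan F v n) ?_ ?_ ?_ ?_ i
      · rw [h.t0e j hp]
        exact add_mem (Submodule.smul_mem _ _ ha) (Submodule.smul_mem _ _ hb)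
      · rw [h.t1e j hp]
        exact add_mem (add_mem (Submodule.smul_mem _ _ ha) (Submodule.smul_mem _ _ hb))
          (Submodule.smul_mem _ _ hc)
      · rw [h.t2e j hp]
        exact Submodule.smul_mem _ _ (sub_mem hb hc)
      · rw [h.t3e j hp]
        exact Submodule.smul_mem _ _ hb
    · refine zmod4_forall (P := fun i => T i (v j) ∈ initSpan F v n) ?_ ?_ ?_ ?_ i
      · rw [h.t0o j hp]
        exact Submodule.smul_mem _ _ (sub_mem hb hc)
      · rw [h.t1o j hp]
        exact Submodule.smul_mem _ _ hb
      · rw [h.t2o j hp]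
        exact add_mem (Submodule.smul_mem _ _ ha) (Submodule.smul_mem _ _ hb)
      · rw [h.t3o j hp]
        exact add_mem (add_mem (Submodule.smul_mem _ _ ha) (Submodule.smul_mem _ _ hb))
          (Submodule.smul_mem _ _ hc)
  · simp
  · intro x y _ _ hx hy
    rw [map_add]; exact add_mem hx hy
  · intro a x _ hx
    rw [map_smul]; exact Submodule.smul_mem _ _ hx

/-- The vector `v` generates the module: the only invariant subspace containing it is `⊤`. -/
def Generates (T : ZMod 4 → Module.End F N) (v : N) : Prop :=
  ∀ P : Submodule F N, (∀ i, ∀ x ∈ P, T i x ∈ P) → v ∈ P → P = ⊤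

/-- If `v₀` generates a module of dimension `n`, then `v₀, …, v_{n-1}` is a basis of it. -/
theorem Chain.initSpan_finrank {q k0 k1 k2 k3 : F} {T : ZMod 4 → Module.End F N} {v : ℕ → N}
    [FiniteDimensional F N]
    (h : Chain q k0 k1 k2 k3 T v) (hg : Generates T (v 0)) :
    (∀ j < Module.finrank F N, v j ∉ initSpan F v j) ∧ initSpan F v (Module.finrank F N) = ⊤ := by
  have hex : ∃ n, v n ∈ initSpan F v n := by
    by_contra! hno
    have h1 := finrank_initSpan (F := F) (v := v) (n := Module.finrank F N + 1) fun j _ => hno j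
    have h2 := Submodule.finrank_le (initSpan F v (Module.finrank F N + 1))
    omega
  classical
  have hlt : ∀ j < Nat.find hex, v j ∉ initSpan F v j := fun j hj => Nat.find_min hex hj
  have hs := Nat.find_spec hex
  have htop : initSpan F v (Nat.find hex) = ⊤ := by
    refine hg _ (h.initSpan_invariant hs) ?_
    rcases Nat.eq_zero_or_pos (Nat.find hex) with h0 | h0
    · rw [h0] at hs ⊢; exact hs
    · exact mem_initSpan h0
  have hn : Module.finrank F N = Nat.find hex := by
    rw [← finrank_initSpan hlt, htop, finrank_top]
  rw [hn]
  exact ⟨hlt, htop⟩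

/-! ### Ranks and determinants -/

/-- The rank of `T - c`. -/
noncomputable def rk (T : Module.End F N) (c : F) : ℕ :=
  Module.finrank F (LinearMap.range (T - c • (1 : Module.End F N)))

/-- Let `D = T - c` vanish on the first `s` vectors, and let `v_{s+2t+1}` agree with a multiple of
`T v_{s+2t}` modulo earlier vectors. Then each block `v_{s+2t}, v_{s+2t+1}` increases the rank of `D`
by exactly one: `D v_{s+2t}` is new, whereas `D v_{s+2t+1}` is not, since `D ² = (c⁻¹ - c) D`. -/
theorem rank_step [FiniteDimensional F N] {T : Module.End F N} {c : F} (hc : c ≠ 0)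
    (hT : ∀ x, T (T x) = (c + c⁻¹) • T x - x) {v : ℕ → N} {n s : ℕ}
    (hv : ∀ j < n, v j ∉ initSpan F v j)
    (hs : ∀ x ∈ initSpan F v s, (T - c • (1 : Module.End F N)) x = 0)
    (hstep : ∀ t, ∃ α : F, v (s + 2 * t + 1) - α • T (v (s + 2 * t)) ∈ initSpan F v (s + 2 * t + 1))
    (t : ℕ) (ht : s + 2 * t ≤ n) :
    Submodule.map (T - c • (1 : Module.End F N)) (initSpan F v (s + 2 * t)) ≤
        initSpan F v (s + 2 * t) ∧
      Module.finrank F (Submodule.map (T - c • (1 : Module.End F N)) (initSpan F v (s + 2 * t))) = t := by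
  set D := T - c • (1 : Module.End F N) with hD
  have hDx : ∀ x, D x = T x - c • x := fun x => by simp [hD]
  have hDD : ∀ x, D (D x) = (c⁻¹ - c) • D x := by
    intro x
    simp only [hDx, map_sub, map_smul, hT]
    match_scalars <;> field_simp <;> ring
  induction t with
  | zero =>
    have : Submodule.map D (initSpan F v (s + 2 * 0)) = ⊥ := by
      rw [eq_bot_iff]
      rintro _ ⟨x, hx, rfl⟩
      exact hs x hx
    rw [this]
    simp
  | succ t ih =>
    obtain ⟨ihle, ihr⟩ := ih (by omega)
    obtain ⟨α, hα⟩ := hstep t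
    set j := s + 2 * t with hj
    have hj2 : s + 2 * (t + 1) = j + 1 + 1 := by omega
    rw [hj2]
    have hj1 : v (j + 1) ∉ initSpan F v (j + 1) := hv _ (by omega)
    have hα' : v (j + 1) - α • D (v j) ∈ initSpan F v (j + 1) := by
      have : v (j + 1) - α • D (v j) = (v (j + 1) - α • T (v j)) + (α * c) • v j := by
        rw [hDx]; module
      rw [this]
      exact add_mem hα (Submodule.smul_mem _ _ (mem_initSpan (Nat.lt_succ_self j)))
    have hα0 : α ≠ 0 := by
      rintro rfl
      simp at hα
      exact hj1 hα
    have hDv : D (v j) ∉ initSpan F v (j + 1) := by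
      intro hcon
      apply hj1
      have := add_mem hα' (Submodule.smul_mem _ α hcon)
      simpa using this
    have hDle : initSpan F v j ≤ initSpan F v (j + 1) := initSpan_mono v (Nat.le_succ j)
    have hmap1 : Submodule.map D (initSpan F v (j + 1)) =
        Submodule.map D (initSpan F v j) ⊔ Submodule.span F {D (v j)} := by
      rw [initSpan_succ, Submodule.map_sup, Submodule.map_span, Set.image_singleton]
    have hDv1 : D (v (j + 1)) ∈
        Submodule.map D (initSpan F v j) ⊔ Submodule.span F {D (v j)} := by
      have h1 := Submodule.mem_map_of_mem (f := D) hα'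
      rw [hmap1, map_sub, map_smul, hDD] at h1
      have h2 : α • (c⁻¹ - c) • D (v j) ∈
          Submodule.map D (initSpan F v j) ⊔ Submodule.span F {D (v j)} :=
        Submodule.smul_mem _ _ (Submodule.smul_mem _ _
          (Submodule.mem_sup_right (Submodule.mem_span_singleton_self _)))
      simpa using add_mem h1 h2
    have hmap2 : Submodule.map D (initSpan F v (j + 1 + 1)) =
        Submodule.map D (initSpan F v j) ⊔ Submodule.span F {D (v j)} := by
      rw [initSpan_succ, Submodule.map_sup, Submodule.map_span, Set.image_singleton, hmap1]
      rw [sup_eq_left, Submodule.span_singleton_le_iff_mem]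
      exact hDv1
    have hDv2 : D (v j) ∈ initSpan F v (j + 1 + 1) := by
      have h1 : α • D (v j) ∈ initSpan F v (j + 1 + 1) := by
        have := sub_mem (mem_initSpan (F := F) (v := v) (Nat.lt_succ_self (j + 1)))
          (initSpan_mono v (Nat.le_succ (j + 1)) hα')
        simpa using this
      simpa [smul_smul, inv_mul_cancel₀ hα0] using Submodule.smul_mem _ α⁻¹ h1
    rw [hmap2]
    refine ⟨sup_le (ihle.trans (initSpan_mono v (by omega))) ?_, ?_⟩
    · rw [Submodule.span_singleton_le_iff_mem]
      exact hDv2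
    · rw [Submodule.finrank_sup_span_singleton, ihr]
      exact fun hcon => hDv (hDle (ihle hcon))

/-- The rank of `T - c` when `s` vectors followed by blocks of size two, and possibly one remaining
vector, form a basis as in `rank_step`. -/
theorem rk_odd [FiniteDimensional F N] {T : Module.End F N} {c : F} (hc : c ≠ 0)
    (hT : ∀ x, T (T x) = (c + c⁻¹) • T x - x) {v : ℕ → N} {n s : ℕ}
    (hv : ∀ j < n, v j ∉ initSpan F v j) (htop : initSpan F v n = ⊤)
    (hs : ∀ x ∈ initSpan F v s, (T - c • (1 : Module.End F N)) x = 0)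
    (hstep : ∀ t, ∃ α : F, v (s + 2 * t + 1) - α • T (v (s + 2 * t)) ∈ initSpan F v (s + 2 * t + 1)) :
    (∀ t, n = s + 2 * t → rk T c = t) ∧
      (∀ t, n = s + 2 * t + 1 → rk T c = t ∨ rk T c = t + 1) := by
  constructor
  · rintro t rfl
    have := (rank_step hc hT hv hs hstep t le_rfl).2
    rw [htop, Submodule.map_top] at this
    exact this
  · rintro t rfl
    have h1 := (rank_step hc hT hv hs hstep t (Nat.le_succ _)).2
    have h2 : LinearMap.range (T - c • (1 : Module.End F N)) =
        Submodule.map (T - c • (1 : Module.End F N)) (initSpan F v (s + 2 * t)) ⊔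
          Submodule.span F {(T - c • (1 : Module.End F N)) (v (s + 2 * t))} := by
      rw [← Submodule.map_top, ← htop, initSpan_succ, Submodule.map_sup, Submodule.map_span,
        Set.image_singleton]
    by_cases hm : (T - c • (1 : Module.End F N)) (v (s + 2 * t)) ∈
        Submodule.map (T - c • (1 : Module.End F N)) (initSpan F v (s + 2 * t))
    · left
      rw [rk, h2, sup_eq_left.2 ((Submodule.span_singleton_le_iff_mem _ _).2 hm), h1]
    · right
      rw [rk, h2, Submodule.finrank_sup_span_singleton hm, h1]

/-- `T` is `c⁻¹` on the range of `T - c` and `c` on the quotient by this range. -/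
theorem det_eq_of_quad [FiniteDimensional F N] {T : Module.End F N} {c : F} (hc : c ≠ 0)
    (hT : ∀ x, T (T x) = (c + c⁻¹) • T x - x) {a : ℕ} (ha : rk T c + a = Module.finrank F N) :
    LinearMap.det T = c⁻¹ ^ rk T c * c ^ a := by
  set D := T - c • (1 : Module.End F N) with hD
  have hrk : rk T c = Module.finrank F (LinearMap.range D) := rfl
  have hDx : ∀ x, D x = T x - c • x := fun x => by simp [hD]
  have hle : LinearMap.range D ≤ (LinearMap.range D).comap T := by
    rintro _ ⟨x, rfl⟩
    exact ⟨T x, by simp [hDx]⟩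
  rw [LinearMap.det_eq_det_mul_det (LinearMap.range D) T hle]
  have h1 : T.restrict hle = c⁻¹ • (1 : Module.End F (LinearMap.range D)) := by
    ext ⟨_, ⟨x, rfl⟩⟩
    simp only [LinearMap.restrict_apply, LinearMap.smul_apply, Module.End.one_apply,
      Submodule.coe_smul, hDx, map_sub, map_smul, hT]
    match_scalars <;> field_simp; ring
  have h2 : (LinearMap.range D).mapQ _ T hle = c • (1 : Module.End F (N ⧸ LinearMap.range D)) := by
    refine LinearMap.ext fun y => ?_
    obtain ⟨x, rfl⟩ := Submodule.mkQ_surjective _ y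
    simp only [Submodule.mkQ_apply, Submodule.mapQ_apply, LinearMap.smul_apply,
      Module.End.one_apply]
    rw [← Submodule.Quotient.mk_smul, Submodule.Quotient.eq]
    exact ⟨x, hDx x⟩
  have h3 : Module.finrank F (N ⧸ LinearMap.range D) = a := by
    have := (LinearMap.range D).finrank_quotient_add_finrank
    rw [hrk] at ha
    omega
  rw [h1, h2, LinearMap.det_smul, LinearMap.det_smul, h3]
  rw [hrk]
  simp

theorem Quad.det_prod {q : F} {k : ZMod 4 → F} {T : ZMod 4 → Module.End F N} (h : Quad q k T) :
    LinearMap.det (T 0) * LinearMap.det (T 1) * LinearMap.det (T 2) * LinearMap.det (T 3) =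
      q⁻¹ ^ Module.finrank F N := by
  have : T 0 * T 1 * T 2 * T 3 = q⁻¹ • (1 : Module.End F N) := by
    ext x
    exact h.prod 0 x
  rw [← map_mul, ← map_mul, ← map_mul, this, LinearMap.det_smul]
  simp

theorem Quad.det_odd [FiniteDimensional F N] {q : F} {k : ZMod 4 → F} {T : ZMod 4 → Module.End F N}
    (h : Quad q k T) {p : ℕ} (hn : Module.finrank F N = 2 * p + 1) (i : ZMod 4) :
    (rk (T i) (k i) = p → LinearMap.det (T i) = k i) ∧
    (rk (T i) (k i) = p + 1 → LinearMap.det (T i) = (k i)⁻¹) := by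
  have hk := h.ne i
  constructor <;> intro hr
  · rw [det_eq_of_quad hk (h.quad i) (a := p + 1) (by omega), hr, inv_pow]
    field_simp
    ring
  · rw [det_eq_of_quad hk (h.quad i) (a := p) (by omega), hr, inv_pow]
    field_simp
    ring

theorem Quad.det_even [FiniteDimensional F N] {q : F} {k : ZMod 4 → F} {T : ZMod 4 → Module.End F N}
    (h : Quad q k T) {p : ℕ} (hn : Module.finrank F N = 2 * p + 2) (i : ZMod 4) :
    (rk (T i) (k i) = p + 1 → LinearMap.det (T i) = 1) ∧
    (rk (T i) (k i) = p → LinearMap.det (T i) = k i ^ 2) := by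
  have hk := h.ne i
  constructor <;> intro hr
  · rw [det_eq_of_quad hk (h.quad i) (a := p + 1) (by omega), hr, inv_pow]
    field_simp
  · rw [det_eq_of_quad hk (h.quad i) (a := p + 2) (by omega), hr, inv_pow]
    field_simp
    ring

/-- The ranks of `Tᵢ - kᵢ` in a module generated by a common eigenvector of `T₀` and `T₃`. In the
basis `w₀, w₁, …`, the operators `T₁, T₂` have blocks `(w₀,w₁), (w₂,w₃), …`, and `T₀, T₃` have blocks
`(w₀), (w₁,w₂), …`; an incomplete last block is the source of the alternatives. -/
theorem Quad.ranks [FiniteDimensional F N] {q : F} (hq : q ≠ 0) {k : ZMod 4 → F}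
    {T : ZMod 4 → Module.End F N} (h : Quad q k T) {v : N} (h0 : T 0 v = k 0 • v)
    (h3 : T 3 v = k 3 • v) (hg : Generates T v) :
    (∀ p, Module.finrank F N = 2 * p + 1 →
      rk (T 0) (k 0) = p ∧ rk (T 3) (k 3) = p ∧
      (rk (T 1) (k 1) = p ∨ rk (T 1) (k 1) = p + 1) ∧
      (rk (T 2) (k 2) = p ∨ rk (T 2) (k 2) = p + 1)) ∧
    (∀ p, Module.finrank F N = 2 * p + 2 →
      rk (T 1) (k 1) = p + 1 ∧ rk (T 2) (k 2) = p + 1 ∧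
      (rk (T 0) (k 0) = p ∨ rk (T 0) (k 0) = p + 1) ∧
      (rk (T 3) (k 3) = p ∨ rk (T 3) (k 3) = p + 1)) := by
  have n0 := h.ne 0
  have n1 := h.ne 1
  have n2 := h.ne 2
  have n3 := h.ne 3
  have hc := chainSeq_chain hq h h0 h3
  set w := chainSeq q k T v with hw
  obtain ⟨hv, htop⟩ := hc.initSpan_finrank (show Generates T (w 0) from hg)
  have hbot : ∀ i, ∀ x ∈ initSpan F w 0, (T i - k i • (1 : Module.End F N)) x = 0 := by
    intro i x hx
    rw [initSpan_zero, Submodule.mem_bot] at hx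
    rw [hx, map_zero]
  have hone : ∀ i, T i v = k i • v → ∀ x ∈ initSpan F w 1,
      (T i - k i • (1 : Module.End F N)) x = 0 := by
    intro i hi x hx
    rw [initSpan_succ, initSpan_zero, bot_sup_eq, Submodule.mem_span_singleton] at hx
    obtain ⟨a, rfl⟩ := hx
    have : w 0 = v := rfl
    simp [this, hi, sub_self]
  have R0 := rk_odd n0 (h.quad 0) hv htop (hone 0 h0) (s := 1) (fun t => by
    refine ⟨-(k 0 * (q ^ (1 + 2 * t) * q)), ?_⟩
    have ho : Odd (1 + 2 * t) := by grind
    rw [hc.t0o _ ho]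
    have hQ := pow_ne_zero (1 + 2 * t) hq
    have : w (1 + 2 * t + 1) - (-(k 0 * (q ^ (1 + 2 * t) * q))) •
        ((k 0)⁻¹ * (q ^ (1 + 2 * t) * q)⁻¹) • (w (1 + 2 * t) - w (1 + 2 * t + 1)) =
        w (1 + 2 * t) := by
      match_scalars <;> field_simp; ring
    rw [this]
    exact mem_initSpan (Nat.lt_succ_self _))
  have R3 := rk_odd n3 (h.quad 3) hv htop (hone 3 h3) (s := 1) (fun t => by
    refine ⟨(k 3)⁻¹, ?_⟩
    have ho : Odd (1 + 2 * t) := by grind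
    rw [hc.t3o _ ho, smul_add, smul_smul (k 3)⁻¹ (k 3), inv_mul_cancel₀ n3, one_smul, sub_add_cancel_right]
    exact neg_mem (Submodule.smul_mem _ _ (add_mem (Submodule.smul_mem _ _ (mem_initSpan (by omega)))
      (Submodule.smul_mem _ _ (mem_initSpan (by omega))))))
  have R1 := rk_odd n1 (h.quad 1) hv htop (hbot 1) (fun t => by
    refine ⟨k 1, ?_⟩
    have ho : Even (0 + 2 * t) := by grind
    rw [hc.t1e _ ho, smul_add, smul_smul (k 1) (k 1)⁻¹, mul_inv_cancel₀ n1, one_smul, sub_add_cancel_right]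
    exact neg_mem (Submodule.smul_mem _ _ (add_mem (Submodule.smul_mem _ _ (mem_initSpan (by omega)))
      (Submodule.smul_mem _ _ (mem_initSpan (by omega))))))
  have R2 := rk_odd n2 (h.quad 2) hv htop (hbot 2) (fun t => by
    refine ⟨-(k 0 * k 1 * k 3 * (q ^ (0 + 2 * t) * q)), ?_⟩
    have ho : Even (0 + 2 * t) := by grind
    rw [hc.t2e _ ho]
    have hQ := pow_ne_zero (0 + 2 * t) hq
    have : w (0 + 2 * t + 1) - (-(k 0 * k 1 * k 3 * (q ^ (0 + 2 * t) * q))) •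
        ((k 0)⁻¹ * (k 1)⁻¹ * (k 3)⁻¹ * (q ^ (0 + 2 * t) * q)⁻¹) •
          (w (0 + 2 * t) - w (0 + 2 * t + 1)) = w (0 + 2 * t) := by
      match_scalars <;> field_simp; ring
    rw [this]
    exact mem_initSpan (Nat.lt_succ_self _))
  refine ⟨fun p hp => ⟨R0.1 p (by omega), R3.1 p (by omega), R1.2 p (by omega), R2.2 p (by omega)⟩,
    fun p hp => ⟨R1.1 _ (by omega), R2.1 _ (by omega), R0.2 p (by omega), R3.2 p (by omega)⟩⟩

/-! ### The module `O(k₀,k₁,k₂,k₃)` as a chain -/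

theorem e_eq_zero {d i : ℕ} (h : d < i) : e F d i = 0 := by
  rw [e, dif_neg (by omega)]

theorem e_basis {d : ℕ} (i : Fin (d + 1)) : e F d i = Pi.basisFun F (Fin (d + 1)) i := by
  rw [e, dif_pos i.2, Pi.basisFun_apply]

theorem span_e (d : ℕ) : Submodule.span F (Set.range (e F d)) = ⊤ := by
  rw [eq_top_iff, ← (Pi.basisFun F (Fin (d + 1))).span_eq]
  refine Submodule.span_mono ?_
  rintro _ ⟨i, rfl⟩
  exact ⟨i, e_basis i⟩

/-- When `k₀k₁k₂k₃ = q^{-d-1}`, the coefficients of `IsO` arise from those of `Chain` through this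
identity and `coef_A`. -/
theorem coef_K {q k0 k1 k2 k3 : F} (hq : q ≠ 0) (n0 : k0 ≠ 0) (n1 : k1 ≠ 0) (n2 : k2 ≠ 0)
    (n3 : k3 ≠ 0) {d : ℕ} (hp : k0 * k1 * k2 * k3 = (q ^ (d + 1))⁻¹) {i : ℕ} (hi : i ≤ d + 1) :
    k0 * k1 * k3 * q ^ i = k2⁻¹ * (q ^ (d + 1 - i))⁻¹ := by
  have h1 : q ^ (d + 1) = q ^ i * q ^ (d + 1 - i) := by rw [← pow_add]; congr 1; omega
  rw [h1] at hp
  have := pow_ne_zero i hq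
  have := pow_ne_zero (d + 1 - i) hq
  field_simp at hp ⊢
  linear_combination hp

theorem coef_A {q k0 k1 k2 k3 : F} (hq : q ≠ 0) (n0 : k0 ≠ 0) (n1 : k1 ≠ 0) (n2 : k2 ≠ 0)
    (n3 : k3 ≠ 0) {d : ℕ} (hp : k0 * k1 * k2 * k3 = (q ^ (d + 1))⁻¹) {i : ℕ} (hi : i ≤ d) :
    k0⁻¹ * k1⁻¹ * k3⁻¹ * (q ^ i * q)⁻¹ = k2 * q ^ (d - i) := by
  have h1 : q ^ (d + 1) = q ^ i * q ^ (d - i) * q := by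
    rw [← pow_add, ← pow_succ]; congr 1; omega
  rw [h1] at hp
  have := pow_ne_zero i hq
  have := pow_ne_zero (d - i) hq
  field_simp at hp ⊢
  linear_combination -hp

theorem IsO.chain {q k0 k1 k2 k3 : F} (hq : q ≠ 0) (n0 : k0 ≠ 0) (n1 : k1 ≠ 0) (n2 : k2 ≠ 0)
    (n3 : k3 ≠ 0) {d : ℕ} (hd : Even d) (hp : k0 * k1 * k2 * k3 = (q ^ (d + 1))⁻¹)
    {T : ZMod 4 → Module.End F (Fin (d + 1) → F)} (h : IsO q k0 k1 k2 k3 d T) :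
    Chain q k0 k1 k2 k3 T (e F d) := by
  obtain ⟨a1, a2, a3, b1, b2, b3, b4, c1, c2, c3, d1, d2⟩ := h
  have z : ∀ {i}, d < i → e F d i = 0 := e_eq_zero
  obtain ⟨s, hs⟩ := id hd
  have hQ : ∀ i, q ^ i ≠ 0 := fun i => pow_ne_zero i hq
  constructor
  · intro i hi
    rcases Nat.eq_zero_or_pos i with rfl | h0
    · simp [a3]
    rcases le_or_gt i d with h1 | h1
    · exact a1 i hi (by obtain ⟨r, hr⟩ := hi; omega) h1
    · rw [z h1, z (show d < i - 1 by obtain ⟨r, hr⟩ := hi; omega)]; simp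
  · intro i hi
    rcases le_or_gt i d with h1 | h1
    · rw [a2 i hi (by obtain ⟨r, hr⟩ := hi; omega), pow_succ]
    · rw [z h1, z (show d < i + 1 by omega)]; simp
  · intro i hi
    rcases Nat.eq_zero_or_pos i with rfl | h0
    · simp [b3]
    rcases lt_trichotomy i d with h1 | rfl | h1
    · exact b1 i hi (by obtain ⟨r, hr⟩ := hi; omega) (by obtain ⟨r, hr⟩ := hi; omega)
    · rw [b4, z (Nat.lt_succ_self i)]; simp
    · rw [z h1, z (show d < i - 1 by obtain ⟨r, hr⟩ := hi; omega), z (show d < i + 1 by omega)]; simp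
  · intro i hi
    rcases le_or_gt i d with h1 | h1
    · exact b2 i hi (by obtain ⟨r, hr⟩ := hi; omega)
    · rw [z h1]; simp
  · intro i hi
    rcases lt_trichotomy i d with h1 | rfl | h1
    · rw [coef_A hq n0 n1 n2 n3 hp h1.le, c1 i hi (by obtain ⟨r, hr⟩ := hi; omega)]
    · rw [coef_A hq n0 n1 n2 n3 hp le_rfl, c3, z (Nat.lt_succ_self i)]; simp
    · rw [z h1, z (show d < i + 1 by omega)]; simp
  · intro i hi
    rcases le_or_gt i (d + 1) with h1 | h1
    · rw [coef_K hq n0 n1 n2 n3 hp h1]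
      rcases Nat.lt_or_ge i (d + 1) with h2 | h2
      · rw [c2 i hi (by obtain ⟨r, hr⟩ := hi; omega), show d - i + 1 = d + 1 - i by omega]
        have := hQ (d + 1 - i)
        match_scalars <;> field_simp
        ring
      · obtain rfl : i = d + 1 := by omega
        rw [z h2]; simp
    · rw [z (show d < i by omega), z (show d < i - 1 by omega)]; simp
  · intro i hi
    rcases le_or_gt i d with h1 | h1
    · exact d1 i hi h1
    · rw [z h1]; simp
  · intro i hi
    rcases le_or_gt i (d + 1) with h1 | h1
    · rw [coef_K hq n0 n1 n2 n3 hp h1]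
      rcases Nat.lt_or_ge i (d + 1) with h2 | h2
      · rw [d2 i hi (by obtain ⟨r, hr⟩ := hi; omega)]
        have := hQ (d + 1 - i)
        match_scalars <;> field_simp
        ring
      · obtain rfl : i = d + 1 := by omega
        rw [z h2, z (show d < d + 1 + 1 by omega)]; simp
    · rw [z (show d < i by omega), z (show d < i - 1 by omega), z (show d < i + 1 by omega)]; simp

theorem Chain.isO {q k0 k1 k2 k3 : F} (hq : q ≠ 0) (n0 : k0 ≠ 0) (n1 : k1 ≠ 0) (n2 : k2 ≠ 0)
    (n3 : k3 ≠ 0) {d : ℕ} (hd : Even d) (hp : k0 * k1 * k2 * k3 = (q ^ (d + 1))⁻¹)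
    {T : ZMod 4 → Module.End F (Fin (d + 1) → F)} (h : Chain q k0 k1 k2 k3 T (e F d)) :
    IsO q k0 k1 k2 k3 d T := by
  have z : ∀ {i}, d < i → e F d i = 0 := e_eq_zero
  obtain ⟨s, hs⟩ := id hd
  have hQ : ∀ i, q ^ i ≠ 0 := fun i => pow_ne_zero i hq
  refine ⟨fun i hi _ _ => h.t0e i hi, fun i hi _ => by rw [h.t0o i hi, pow_succ], ?_,
    fun i hi _ _ => h.t1e i hi, fun i hi _ => h.t1o i hi, ?_, ?_, ?_, ?_, ?_,
    fun i hi _ => h.t3e i hi, ?_⟩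
  · simpa using h.t0e 0 Even.zero
  · simpa using h.t1e 0 Even.zero
  · simpa [z (Nat.lt_succ_self d)] using h.t1e d hd
  · intro i hi h1
    rw [h.t2e i hi, coef_A hq n0 n1 n2 n3 hp (by omega)]
  · intro i hi h1
    rw [h.t2o i hi, coef_K hq n0 n1 n2 n3 hp (by omega), show d - i + 1 = d + 1 - i by obtain ⟨r, hr⟩ := hi; omega]
    have := hQ (d + 1 - i)
    match_scalars <;> field_simp
    ring
  · rw [h.t2e d hd, coef_A hq n0 n1 n2 n3 hp le_rfl, z (Nat.lt_succ_self d)]; simp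
  · intro i hi h1
    rw [h.t3o i hi, coef_K hq n0 n1 n2 n3 hp (by omega)]
    have := hQ (d + 1 - i)
    match_scalars <;> field_simp
    ring

/-! ### Generators of spans of chains -/

/-- The inverse of `Tᵢ` is `kᵢ + kᵢ⁻¹ - Tᵢ`. -/
theorem Quad.isRep {q : F} {k : ZMod 4 → F} {T : ZMod 4 → Module.End F N} (h : Quad q k T) :
    IsRep q T := by
  have hu : ∀ i, ∃ u : (Module.End F N)ˣ, (u : Module.End F N) = T i ∧
      ((u⁻¹ : (Module.End F N)ˣ) : Module.End F N) =
        (k i + (k i)⁻¹) • (1 : Module.End F N) - T i := fun i =>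
    ⟨⟨T i, (k i + (k i)⁻¹) • (1 : Module.End F N) - T i,
      LinearMap.ext fun x => by simp [h.quad i x], LinearMap.ext fun x => by simp [h.quad i x]⟩,
      rfl, rfl⟩
  refine ⟨fun i => ?_, fun i j => ?_, LinearMap.ext fun x => h.prod 0 x⟩
  · obtain ⟨u, hu, -⟩ := hu i
    exact ⟨u, hu⟩
  · obtain ⟨u, h1, h2⟩ := hu i
    rw [← h1, Ring.inverse_unit, h2, h1, add_sub_cancel]
    exact (Commute.one_left _).smul_left _

theorem Chain.map {q k0 k1 k2 k3 : F} {T : ZMod 4 → Module.End F N} {v : ℕ → N}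
    (h : Chain q k0 k1 k2 k3 T v) {N' : Type*} [AddCommGroup N'] [Module F N']
    {T' : ZMod 4 → Module.End F N'} (S : N →ₗ[F] N') (hS : ∀ i x, S (T i x) = T' i (S x)) :
    Chain q k0 k1 k2 k3 T' (fun i => S (v i)) where
  t0e i hi := by rw [← hS, h.t0e i hi]; simp only [map_add, map_smul]
  t0o i hi := by rw [← hS, h.t0o i hi]; simp only [map_sub, map_smul]
  t1e i hi := by rw [← hS, h.t1e i hi]; simp only [map_add, map_smul]
  t1o i hi := by rw [← hS, h.t1o i hi]; simp only [map_smul]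
  t2e i hi := by rw [← hS, h.t2e i hi]; simp only [map_sub, map_smul]
  t2o i hi := by rw [← hS, h.t2o i hi]; simp only [map_add, map_smul]
  t3e i hi := by rw [← hS, h.t3e i hi]; simp only [map_smul]
  t3o i hi := by rw [← hS, h.t3o i hi]; simp only [map_add, map_smul]

theorem generates_of_span {T : ZMod 4 → Module.End F N} {v : ℕ → N} {x : N}
    (hspan : Submodule.span F (Set.range v) = ⊤)
    (h : ∀ P : Submodule F N, (∀ i, ∀ x ∈ P, T i x ∈ P) → x ∈ P → ∀ j, v j ∈ P) :
    Generates T x := by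
  intro P hP hx
  rw [eq_top_iff, ← hspan, Submodule.span_le]
  rintro _ ⟨j, rfl⟩
  exact h P hP hx j

theorem Chain.generates_zero {q k0 k1 k2 k3 : F} (hq : q ≠ 0) (n0 : k0 ≠ 0) (n1 : k1 ≠ 0)
    (n3 : k3 ≠ 0) {T : ZMod 4 → Module.End F N} {v : ℕ → N} (h : Chain q k0 k1 k2 k3 T v)
    (hspan : Submodule.span F (Set.range v) = ⊤) : Generates T (v 0) := by
  refine generates_of_span hspan fun P hP h0 j => ?_
  have aux : ∀ {c : F} (i : ZMod 4) {x y : N}, c ≠ 0 → T i x = c • (x - y) → x ∈ P → y ∈ P := by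
    intro c i x y hc hxy hx
    have h1 := hP i x hx
    rw [hxy, P.smul_mem_iff hc] at h1
    exact (P.sub_mem_iff_right hx).1 h1
  induction j with
  | zero => exact h0
  | succ j ih =>
    have hQ := pow_ne_zero j hq
    rcases Nat.even_or_odd j with hj | hj
    · exact aux 2 (by simp [*]) (h.t2e j hj) ih
    · exact aux 0 (by simp [*]) (h.t0o j hj) ih

/-- For parameters in `OP_d`, the coefficients leading from `vᵢ` down to `vᵢ₋₁` do not vanish. -/
theorem Chain.generates_last {q k0 k1 k2 k3 : F} (hq : q ≠ 0) (hroot : ∀ n : ℕ, 1 ≤ n → q ^ n ≠ 1)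
    (n0 : k0 ≠ 0) (n1 : k1 ≠ 0) (n2 : k2 ≠ 0) (n3 : k3 ≠ 0) {d : ℕ} (hd : Even d)
    (hp : k0 * k1 * k2 * k3 = (q ^ (d + 1))⁻¹)
    (hk : ∀ i : ℕ, Even i → 2 ≤ i → i ≤ d → k0 ^ 2 ≠ (q ^ i)⁻¹ ∧ k2 ^ 2 ≠ (q ^ i)⁻¹)
    {T : ZMod 4 → Module.End F N} {v : ℕ → N} (h : Chain q k0 k1 k2 k3 T v)
    (hspan : Submodule.span F (Set.range v) = ⊤) (hz : ∀ i, d < i → v i = 0) :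
    Generates T (v d) := by
  refine generates_of_span hspan fun P hP h0 => ?_
  obtain ⟨s, hs⟩ := id hd
  have aux : ∀ {a b : F} (i : ZMod 4) {x y : N}, a ≠ 0 → T i x = a • y + b • x → x ∈ P → y ∈ P := by
    intro a b i x y ha hxy hx
    have h1 := hP i x hx
    rw [hxy, P.add_mem_iff_left (P.smul_mem _ hx), P.smul_mem_iff ha] at h1
    exact h1
  have hdown : ∀ j, j ≤ d → v (d - j) ∈ P := by
    intro j
    induction j with
    | zero => exact fun _ => h0
    | succ j ih =>
      intro hj
      have hm := ih (by omega)
      obtain ⟨i, hi⟩ : ∃ i, i = d - j := ⟨_, rfl⟩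
      rw [← hi] at hm
      rw [show d - (j + 1) = i - 1 by omega]
      have hQ := pow_ne_zero i hq
      rcases Nat.even_or_odd i with he | he
      · refine aux 0 ?_ (h.t0e i he) hm
        obtain ⟨r, hr⟩ := id he
        have h1 := hroot i (by omega)
        have h2 := (hk i he (by omega) (by omega)).1
        refine mul_ne_zero (mul_ne_zero (mul_ne_zero (inv_ne_zero n0) (inv_ne_zero hQ))
          (sub_ne_zero.2 (Ne.symm h1))) (sub_ne_zero.2 fun h3 => h2 ?_)
        exact eq_inv_of_mul_eq_one_left h3.symm
      · refine aux 2 ?_ (h.t2o i he) hm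
        obtain ⟨r, hr⟩ := id he
        have h1 := hroot (d + 1 - i) (by omega)
        have h2 := (hk (d + 1 - i) ⟨s - r, by omega⟩ (by omega) (by omega)).2
        rw [coef_K hq n0 n1 n2 n3 hp (by omega)]
        have hQ' := pow_ne_zero (d + 1 - i) hq
        refine mul_ne_zero (mul_ne_zero (by simp [*]) (sub_ne_zero.2 fun h3 => h2 ?_))
          (sub_ne_zero.2 fun h3 => h1 ?_)
        · field_simp at h3 ⊢
          linear_combination -h3
        · field_simp at h3
          exact h3.symm
  intro j
  rcases le_or_gt j d with hj | hj
  · simpa [Nat.sub_sub_self hj] using hdown (d - j) (by omega)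
  · rw [hz j hj]; exact P.zero_mem

theorem pow_inj_of_not_root {q : F} (hq : q ≠ 0) (hroot : ∀ n : ℕ, 1 ≤ n → q ^ n ≠ 1) {a b : ℕ}
    (h : q ^ a = q ^ b) : a = b := by
  wlog hab : a ≤ b generalizing a b
  · exact (this h.symm (by omega)).symm
  by_contra hne
  refine hroot (b - a) (by omega) ?_
  rw [pow_sub₀ q hq hab, ← h, mul_inv_cancel₀ (pow_ne_zero a hq)]

theorem generates_twist {T : ZMod 4 → Module.End F N} {v : N} (h : Generates T v) (ε : ZMod 4) :
    Generates (twist T ε) v := by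
  intro P hP hv
  refine h P (fun i x hx => ?_) hv
  have := hP (i - ε) x hx
  rwa [twist, sub_add_cancel] at this

/-! ### Irreducibility and determinants of `O(k₀,k₁,k₂,k₃)` -/

/-- For parameters in `OP_d`, a nonzero module spanned by a chain that stops at `d` has
dimension `d + 1`, and `kᵢ` is the determinant of `Tᵢ`. The module is generated both by the
`(T₀,T₃)`-eigenvector `v₀` and by the `(T₃,T₂)`-eigenvector `v_d`, which fixes all
determinants except one; the last one comes from the product of the four. -/
theorem Chain.dets [FiniteDimensional F N] {q : F} (hq : q ≠ 0)
    (hroot : ∀ n : ℕ, 1 ≤ n → q ^ n ≠ 1) {k : ZMod 4 → F} (hn : ∀ i, k i ≠ 0) {d : ℕ} (hd : Even d)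
    (hp : k 0 * k 1 * k 2 * k 3 = (q ^ (d + 1))⁻¹)
    (hk : ∀ i : ℕ, Even i → 2 ≤ i → i ≤ d → ∀ j, k j ^ 2 ≠ (q ^ i)⁻¹)
    {T : ZMod 4 → Module.End F N} {v : ℕ → N} (h : Chain q (k 0) (k 1) (k 2) (k 3) T v)
    (hspan : Submodule.span F (Set.range v) = ⊤) (hz : ∀ i, d < i → v i = 0)
    (hn0 : 1 ≤ Module.finrank F N) (hn1 : Module.finrank F N ≤ d + 1) :
    Module.finrank F N = d + 1 ∧ ∀ i, LinearMap.det (T i) = k i := by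
  obtain ⟨s, hs⟩ := id hd
  have hQ := h.quad hq hn hspan
  have A := hQ.ranks hq (v := v 0) (by simpa using h.t0e 0 Even.zero) (h.t3e 0 Even.zero)
    (h.generates_zero hq (hn 0) (hn 1) (hn 3) hspan)
  have B := (hQ.twist 3).ranks hq (v := v d) (h.t3e d hd) (by
      change T 2 (v d) = k 2 • v d
      rw [h.t2e d hd, coef_A hq (hn 0) (hn 1) (hn 2) (hn 3) hp le_rfl, hz _ (Nat.lt_succ_self d)]
      simp)
    (generates_twist (h.generates_last hq hroot (hn 0) (hn 1) (hn 2) (hn 3) hd hp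
      (fun i a b c => ⟨hk i a b c 0, hk i a b c 2⟩) hspan hz) 3)
  have hdet := hQ.det_prod
  have hodd := fun p hp i => hQ.det_odd (p := p) hp i
  have heven := fun p hp i => hQ.det_even (p := p) hp i
  set n := Module.finrank F N with hn'
  have hqn := pow_ne_zero n hq
  have hqd := pow_ne_zero (d + 1) hq
  have m0 := hn 0
  have m1 := hn 1
  have m2 := hn 2
  have m3 := hn 3
  rcases Nat.even_or_odd' n with ⟨p, hpn | hpn⟩
  · -- In even dimension the determinant identity reads `1 = q⁻ⁿ` or `k₃² = q⁻ⁿ`.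
    exfalso
    obtain ⟨p, rfl⟩ : ∃ r, p = r + 1 := ⟨p - 1, by omega⟩
    obtain ⟨A1, A2, -, A3⟩ := A.2 p (by omega)
    have B1 : rk (T 0) (k 0) = p + 1 := (B.2 p (by omega)).1
    rw [(heven p (by omega) 0).1 B1, (heven p (by omega) 1).1 A1, (heven p (by omega) 2).1 A2] at hdet
    rcases A3 with A3 | A3
    · rw [(heven p (by omega) 3).2 A3] at hdet
      refine hk n ⟨p + 1, by omega⟩ (by omega) (by omega) 3 ?_
      simpa using hdet
    · rw [(heven p (by omega) 3).1 A3] at hdet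
      refine hroot n hn0 ?_
      simpa using hdet.symm
  · obtain ⟨A1, A2, A3, -⟩ := A.1 p hpn
    have B1 : rk (T 2) (k 2) = p := (B.1 p hpn).2.1
    have D0 := (hodd p hpn 0).1 A1
    have D2 := (hodd p hpn 2).1 B1
    have D3 := (hodd p hpn 3).1 A2
    rcases A3 with A3 | A3
    · have D1 := (hodd p hpn 1).1 A3
      rw [D0, D1, D2, D3, hp, inv_pow] at hdet
      exact ⟨(pow_inj_of_not_root hq hroot (inv_injective hdet)).symm, zmod4_forall D0 D1 D2 D3⟩
    · -- Here `k₁² = q^{-(d+1-n)}`, which is excluded by `OP_d` unless `n = d + 1` and `k₁² = 1`.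
      have D1 := (hodd p hpn 1).2 A3
      rw [D0, D1, D2, D3, inv_pow] at hdet
      have hsq : k 1 ^ 2 = (q ^ (d + 1 - n))⁻¹ := by
        rw [pow_sub₀ q hq hn1]
        field_simp at hdet hp ⊢
        linear_combination q ^ n * hp - k 1 * q ^ (d + 1) * hdet
      rcases Nat.eq_zero_or_pos (d + 1 - n) with h0 | h0
      · refine ⟨by omega, zmod4_forall D0 ?_ D2 D3⟩
        rw [D1]
        rw [h0, pow_zero, inv_one] at hsq
        exact inv_eq_of_mul_eq_one_left (by rw [← sq, hsq])
      · exact absurd hsq (hk _ ⟨s - p, by omega⟩ (by omega) (by omega) 1)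

/-- A proper invariant subspace would give a nonzero quotient of dimension less than `d + 1`. -/
theorem Chain.irred {q : F} (hq : q ≠ 0)
    (hroot : ∀ n : ℕ, 1 ≤ n → q ^ n ≠ 1) {k : ZMod 4 → F} (hn : ∀ i, k i ≠ 0) {d : ℕ} (hd : Even d)
    (hp : k 0 * k 1 * k 2 * k 3 = (q ^ (d + 1))⁻¹)
    (hk : ∀ i : ℕ, Even i → 2 ≤ i → i ≤ d → ∀ j, k j ^ 2 ≠ (q ^ i)⁻¹)
    {T : ZMod 4 → Module.End F (Fin (d + 1) → F)}
    (h : Chain q (k 0) (k 1) (k 2) (k 3) T (e F d)) : Irred T := by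
  refine ⟨exists_ne 0, fun W hW => ?_⟩
  by_cases hWt : W = ⊤
  · exact Or.inr hWt
  left
  have hS := h.map (T' := fun i => W.mapQ W (T i) (hW i)) W.mkQ (fun i x => rfl)
  have hsp : Submodule.span F (Set.range fun i => W.mkQ (e F d i)) = ⊤ := by
    rw [Set.range_comp' W.mkQ (e F d), ← Submodule.map_span, span_e, Submodule.map_top,
      Submodule.range_mkQ]
  have hf := W.finrank_quotient_add_finrank
  rw [Module.finrank_fin_fun] at hf
  have : Nontrivial ((Fin (d + 1) → F) ⧸ W) := Submodule.Quotient.nontrivial_iff.2 hWt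
  have hpos : 0 < Module.finrank F ((Fin (d + 1) → F) ⧸ W) := Module.finrank_pos
  have := (hS.dets hq hroot hn hd hp hk hsp (fun i hi => by rw [e_eq_zero hi, map_zero])
    hpos (by omega)).1
  exact Submodule.finrank_eq_zero.1 (by omega)

theorem Chain.det_eq {q : F} (hq : q ≠ 0)
    (hroot : ∀ n : ℕ, 1 ≤ n → q ^ n ≠ 1) {k : ZMod 4 → F} (hn : ∀ i, k i ≠ 0) {d : ℕ} (hd : Even d)
    (hp : k 0 * k 1 * k 2 * k 3 = (q ^ (d + 1))⁻¹)
    (hk : ∀ i : ℕ, Even i → 2 ≤ i → i ≤ d → ∀ j, k j ^ 2 ≠ (q ^ i)⁻¹)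
    {T : ZMod 4 → Module.End F (Fin (d + 1) → F)}
    (h : Chain q (k 0) (k 1) (k 2) (k 3) T (e F d)) (i : ZMod 4) : LinearMap.det (T i) = k i :=
  (h.dets hq hroot hn hd hp hk (span_e d) (fun _ => e_eq_zero) (by simp) (by simp)).2 i

theorem Chain.unique {q k0 k1 k2 k3 : F} {T T' : ZMod 4 → Module.End F N} {v : ℕ → N}
    (h : Chain q k0 k1 k2 k3 T v) (h' : Chain q k0 k1 k2 k3 T' v)
    (hspan : Submodule.span F (Set.range v) = ⊤) (i : ZMod 4) : T i = T' i := by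
  refine LinearMap.ext_on_range hspan fun j => ?_
  rcases Nat.even_or_odd j with hj | hj
  · refine zmod4_forall (P := fun i => T i (v j) = T' i (v j)) ?_ ?_ ?_ ?_ i
    · rw [h.t0e j hj, h'.t0e j hj]
    · rw [h.t1e j hj, h'.t1e j hj]
    · rw [h.t2e j hj, h'.t2e j hj]
    · rw [h.t3e j hj, h'.t3e j hj]
  · refine zmod4_forall (P := fun i => T i (v j) = T' i (v j)) ?_ ?_ ?_ ?_ i
    · rw [h.t0o j hj, h'.t0o j hj]
    · rw [h.t1o j hj, h'.t1o j hj]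
    · rw [h.t2o j hj, h'.t2o j hj]
    · rw [h.t3o j hj, h'.t3o j hj]

theorem Iso.det_eq {N' : Type*} [AddCommGroup N'] [Module F N'] {T : ZMod 4 → Module.End F N}
    {T' : ZMod 4 → Module.End F N'} (h : Iso T T') (i : ZMod 4) :
    LinearMap.det (T i) = LinearMap.det (T' i) := by
  obtain ⟨S, hS⟩ := h
  rw [← LinearMap.det_conj (T i) S]
  congr 1
  ext x
  simp [hS]

/-! ### Irreducible modules of odd dimension -/

/-- On an irreducible module each `Tᵢ + Tᵢ⁻¹` is a scalar `c + c⁻¹`, where `c` is an eigenvalue of `Tᵢ`.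
The ranks of `Tᵢ - c` and `Tᵢ - c⁻¹` add up to at most `2m + 1`, so one of them is at most `m`. -/
theorem exists_quad [IsAlgClosed F] {q : F} {T : ZMod 4 → Module.End F N} (h : IsRep q T)
    (hi : Irred T) {m : ℕ} (hN : Module.finrank F N = 2 * m + 1) :
    ∃ k, Quad q k T ∧ ∀ i, rk (T i) (k i) ≤ m := by
  have : FiniteDimensional F N := Module.finite_of_finrank_pos (by omega)
  have : Nontrivial N := Module.nontrivial_of_finrank_pos (R := F) (by omega)
  obtain ⟨hu, hc, hp⟩ := h
  have hinj : ∀ i, Function.Injective (T i) := fun i =>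
    ((Module.End.isUnit_iff _).1 (hu i)).injective
  have hex : ∀ i, ∃ c : F, c ≠ 0 ∧ (∀ x, T i (T i x) = (c + c⁻¹) • T i x - x) ∧ rk (T i) c ≤ m := by
    intro i
    obtain ⟨c, hcv⟩ := Module.End.exists_eigenvalue (T i)
    obtain ⟨x, hx⟩ := hcv.exists_hasEigenvector
    have hTx := hx.apply_eq_smul
    have hx0 := hx.2
    have hc0 : c ≠ 0 := by
      rintro rfl
      exact hx0 (hinj i (by rw [hTx, zero_smul, map_zero]))
    have hinv : ∀ y, Ring.inverse (T i) (T i y) = y := fun y => by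
      have := congrArg (fun f : Module.End F N => f y) (Ring.inverse_mul_cancel _ (hu i))
      simpa using this
    have hinv' : ∀ y, T i (Ring.inverse (T i) y) = y := fun y => by
      have := congrArg (fun f : Module.End F N => f y) (Ring.mul_inverse_cancel _ (hu i))
      simpa using this
    have hix : Ring.inverse (T i) x = c⁻¹ • x := by
      have h1 := hinv x
      rw [hTx, map_smul] at h1
      rw [← h1, smul_smul, inv_mul_cancel₀ hc0, one_smul, h1]
    have htop : Module.End.eigenspace (T i + Ring.inverse (T i)) (c + c⁻¹) = ⊤ := by
      refine (hi.2 _ fun j y hy => ?_).resolve_left fun hbot => hx0 ?_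
      · rw [Module.End.mem_eigenspace_iff] at hy ⊢
        have h1 := congrArg (fun f : Module.End F N => f y) (hc i j).eq
        simp only [Module.End.mul_apply] at h1
        rw [h1, hy, map_smul]
      · rw [← Submodule.mem_bot F, ← hbot, Module.End.mem_eigenspace_iff, LinearMap.add_apply,
          hTx, hix, add_smul]
    have hquad : ∀ y, T i (T i y) = (c + c⁻¹) • T i y - y := by
      intro y
      have h1 : y ∈ Module.End.eigenspace (T i + Ring.inverse (T i)) (c + c⁻¹) := by
        rw [htop]; trivial
      rw [Module.End.mem_eigenspace_iff, LinearMap.add_apply] at h1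
      rw [← map_smul, ← h1, map_add, hinv']
      abel
    have hsum : rk (T i) c + rk (T i) c⁻¹ ≤ 2 * m + 1 := by
      have h1 := (T i - c • (1 : Module.End F N)).finrank_range_add_finrank_ker
      have h2 : LinearMap.range (T i - c⁻¹ • (1 : Module.End F N)) ≤
          LinearMap.ker (T i - c • (1 : Module.End F N)) := by
        rintro _ ⟨y, rfl⟩
        rw [LinearMap.mem_ker]
        simp only [LinearMap.sub_apply, LinearMap.smul_apply, Module.End.one_apply, map_sub,
          map_smul, hquad]
        match_scalars <;> field_simp <;> ring
      have h3 := Submodule.finrank_mono h2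
      rw [hN] at h1
      rw [rk, rk]
      omega
    by_cases hr : rk (T i) c ≤ m
    · exact ⟨c, hc0, hquad, hr⟩
    · exact ⟨c⁻¹, inv_ne_zero hc0, fun y => by rw [hquad, inv_inv, add_comm c], by omega⟩
  choose k hk using hex
  refine ⟨k, ⟨fun i => (hk i).1, fun i => (hk i).2.1, ?_⟩, fun i => (hk i).2.2⟩
  have hstep : ∀ i, (∀ x, T i (T (i + 1) (T (i + 2) (T (i + 3) x))) = q⁻¹ • x) →
      ∀ x, T (i + 1) (T (i + 1 + 1) (T (i + 1 + 2) (T (i + 1 + 3) x))) = q⁻¹ • x := by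
    intro i hx x
    apply hinj i
    have e1 : i + 1 + 1 = i + 2 := by ring
    have e2 : i + 1 + 2 = i + 3 := by ring
    have e3 : i + 1 + 3 = i := by
      rw [add_assoc, show (1 + 3 : ZMod 4) = 0 from rfl, add_zero]
    rw [e1, e2, e3, hx, map_smul]
  have p0 : ∀ x, T 0 (T (0 + 1) (T (0 + 2) (T (0 + 3) x))) = q⁻¹ • x := fun x =>
    congrArg (fun f : Module.End F N => f x) hp
  have p1 := hstep 0 p0
  have p2 := hstep _ p1
  have p3 := hstep _ p2
  exact zmod4_forall p0 p1 p2 p3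

/-- Two eigenspaces of dimension at least `m + 1` in dimension `2m + 1` have a common vector. -/
theorem exists_common_eigenvector [FiniteDimensional F N] {q : F} {k : ZMod 4 → F}
    {T : ZMod 4 → Module.End F N} {m : ℕ} (hN : Module.finrank F N = 2 * m + 1)
    (hr : ∀ i, rk (T i) (k i) ≤ m) (i j : ZMod 4) :
    ∃ v : N, v ≠ 0 ∧ T i v = k i • v ∧ T j v = k j • v := by
  have h1 := (T i - k i • (1 : Module.End F N)).finrank_range_add_finrank_ker
  have h2 := (T j - k j • (1 : Module.End F N)).finrank_range_add_finrank_ker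
  have h3 := Submodule.finrank_sup_add_finrank_inf_eq
    (LinearMap.ker (T i - k i • (1 : Module.End F N)))
    (LinearMap.ker (T j - k j • (1 : Module.End F N)))
  have h4 := Submodule.finrank_le (LinearMap.ker (T i - k i • (1 : Module.End F N)) ⊔
    LinearMap.ker (T j - k j • (1 : Module.End F N)))
  have h5 := hr i
  have h6 := hr j
  rw [rk] at h5 h6
  have hne : LinearMap.ker (T i - k i • (1 : Module.End F N)) ⊓
      LinearMap.ker (T j - k j • (1 : Module.End F N)) ≠ ⊥ := by
    intro hb
    rw [hb, finrank_bot] at h3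
    omega
  obtain ⟨v, hv, hv0⟩ := Submodule.exists_mem_ne_zero_of_ne_bot hne
  rw [Submodule.mem_inf, LinearMap.mem_ker, LinearMap.mem_ker] at hv
  exact ⟨v, hv0, by simpa [sub_eq_zero] using hv.1, by simpa [sub_eq_zero] using hv.2⟩

theorem Quad.rk_det [FiniteDimensional F N] {q : F} (hq : q ≠ 0) {k : ZMod 4 → F}
    {T : ZMod 4 → Module.End F N} (h : Quad q k T) (hg : ∀ x : N, x ≠ 0 → Generates T x) {m : ℕ}
    (hN : Module.finrank F N = 2 * m + 1) (hr : ∀ i, rk (T i) (k i) ≤ m) (i : ZMod 4) :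
    rk (T i) (k i) = m ∧ LinearMap.det (T i) = k i := by
  have hm : ∀ i, rk (T i) (k i) = m := by
    obtain ⟨v, hv, h0, h3⟩ := exists_common_eigenvector (q := q) hN hr 0 3
    obtain ⟨r0, r3, r1, r2⟩ := (h.ranks hq h0 h3 (hg v hv)).1 m hN
    have h1 := hr 1
    have h2 := hr 2
    exact zmod4_forall r0 (by omega) (by omega) r3
  exact ⟨hm i, (h.det_odd hN i).1 (hm i)⟩

/-- If `k₀² = q^{-j}`, the chain vector `w_j` is a `T₀`-eigenvector for `k₀⁻¹`, so that `det T₀` is both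
`k₀` and `k₀⁻¹`, and `q ^ j = 1`. -/
theorem Quad.sq_ne [FiniteDimensional F N] {q : F} (hq : q ≠ 0)
    (hroot : ∀ n : ℕ, 1 ≤ n → q ^ n ≠ 1) {k : ZMod 4 → F}
    {T : ZMod 4 → Module.End F N} (h : Quad q k T) (hg : ∀ x : N, x ≠ 0 → Generates T x) {m : ℕ}
    (hN : Module.finrank F N = 2 * m + 1) (hr : ∀ i, rk (T i) (k i) ≤ m) {j : ℕ} (hj : Even j)
    (hj2 : 2 ≤ j) (hjm : j ≤ 2 * m) : k 0 ^ 2 ≠ (q ^ j)⁻¹ := by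
  intro hk
  obtain ⟨v, hv, h0, h3⟩ := exists_common_eigenvector (q := q) hN hr 0 3
  have hc := chainSeq_chain hq h h0 h3
  have hfr := (hc.initSpan_finrank (hg v hv)).1 j (by omega)
  set w := chainSeq q k T v with hw
  have hwj : w j ≠ 0 := fun h0 => hfr (by rw [h0]; exact Submodule.zero_mem _)
  have n0 := h.ne 0
  have hQ := pow_ne_zero j hq
  have e0 : T 0 (w j) = (k 0)⁻¹ • w j := by
    rw [hc.t0e j hj]
    have h1 : 1 - k 0 ^ 2 * q ^ j = 0 := by rw [hk, inv_mul_cancel₀ hQ, sub_self]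
    have h2 : k 0 + (k 0)⁻¹ - (k 0)⁻¹ * (q ^ j)⁻¹ = (k 0)⁻¹ := by
      rw [← hk]; field_simp; ring
    rw [h1, h2]
    simp
  have h' : Quad q (Function.update k 0 (k 0)⁻¹) T := by
    refine ⟨fun i => ?_, fun i x => ?_, h.prod⟩
    · by_cases hi : i = 0
      · subst hi; simpa using n0
      · simpa [hi] using h.ne i
    · by_cases hi : i = 0
      · subst hi; rw [Function.update_self, inv_inv, add_comm, h.quad]
      · simpa [hi] using h.quad i x
  have r := ((h'.ranks hq (v := w j) (by simpa using e0)
    (by simpa [show (3 : ZMod 4) ≠ 0 by decide] using hc.t3e j hj) (hg _ hwj)).1 m hN).1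
  have d1 := (h'.det_odd hN 0).1 r
  rw [Function.update_self, (h.rk_det hq hg hN hr 0).2] at d1
  have : k 0 ^ 2 = 1 := by
    rw [sq]; nth_rewrite 1 [d1]; exact inv_mul_cancel₀ n0
  rw [this] at hk
  exact hroot j (by omega) (by rw [← inv_inv (q ^ j), ← hk, inv_one])

/-- In dimension `2m + 1` the chain stops at `2m`. The vectors `w₁, w₃, …, w_{2m-1}` span the range of
`T₁ - k₁`, which also contains `w_{2m+1}`. But `T₂ w_{2m+1} = k₂⁻¹ w_{2m+1}`, and no nonzero
combination of `w₁, …, w_{2m-1}` has this property. -/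
theorem chainSeq_eq_zero [FiniteDimensional F N] {q : F} (hq : q ≠ 0)
    (hroot : ∀ n : ℕ, 1 ≤ n → q ^ n ≠ 1) {k : ZMod 4 → F}
    {T : ZMod 4 → Module.End F N} (h : Quad q k T) {m : ℕ}
    (hN : Module.finrank F N = 2 * m + 1) (hr : rk (T 1) (k 1) = m)
    (hp : k 0 * k 1 * k 2 * k 3 = (q ^ (2 * m + 1))⁻¹)
    {v : N} (h0 : T 0 v = k 0 • v) (h3 : T 3 v = k 3 • v) (hg : Generates T v) :
    ∀ i, 2 * m < i → chainSeq q k T v i = 0 := by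
  have hc := chainSeq_chain hq h h0 h3
  have hfr := (hc.initSpan_finrank hg).1
  rw [hN] at hfr
  have hrec : ∀ i, chainSeq q k T v i = 0 → chainSeq q k T v (i + 1) = 0 := by
    intro i hi
    rw [chainSeq, hi]
    simp
  set w := chainSeq q k T v with hw
  have n1 := h.ne 1
  suffices hz : w (2 * m + 1) = 0 by
    intro i hi
    induction i, (show 2 * m + 1 ≤ i by omega) using Nat.le_induction with
    | base => exact hz
    | succ i hmi ih => exact hrec i (ih (by omega))
  set o : ℕ → N := fun t => w (2 * t + 1) with ho
  have hle : ∀ t, initSpan F o t ≤ initSpan F w (2 * t) := by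
    intro t
    refine Submodule.span_le.2 ?_
    rintro _ ⟨s, hs, rfl⟩
    have hs : s < t := hs
    exact mem_initSpan (by omega)
  have hrange : ∀ t, o t ∈ LinearMap.range (T 1 - k 1 • (1 : Module.End F N)) := by
    intro t
    induction t with
    | zero =>
      refine ⟨k 1 • w 0, ?_⟩
      have := hc.t1e 0 Even.zero
      rw [pow_zero, sub_self, mul_zero, zero_mul, neg_zero, zero_smul, zero_add] at this
      simp only [map_smul, LinearMap.sub_apply, LinearMap.smul_apply, Module.End.one_apply, this, ho]
      match_scalars <;> field_simp
      ring
    | succ t ih =>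
      obtain ⟨y, hy⟩ := ih
      have := hc.t1e (2 * (t + 1)) (even_two_mul _)
      rw [show 2 * (t + 1) - 1 = 2 * t + 1 by omega] at this
      set β := -(k 1 * (1 - q ^ (2 * (t + 1))) * (1 - k 0 ^ 2 * q ^ (2 * (t + 1)))) with hβ
      refine ⟨k 1 • (w (2 * (t + 1)) - β • y), ?_⟩
      rw [map_smul, map_sub, map_smul, hy]
      simp only [LinearMap.sub_apply, LinearMap.smul_apply, Module.End.one_apply, this, ho]
      match_scalars <;> field_simp <;> ring
  have hmem : o m ∈ initSpan F o m := by
    have h1 : Module.finrank F (initSpan F o m) = m :=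
      finrank_initSpan fun j hj hcon =>
        hfr (2 * j + 1) (by omega) (initSpan_mono w (Nat.le_succ _) (hle j hcon))
    have h2 : initSpan F o m ≤ LinearMap.range (T 1 - k 1 • (1 : Module.End F N)) := by
      refine Submodule.span_le.2 ?_
      rintro _ ⟨s, -, rfl⟩
      exact hrange s
    rw [Submodule.eq_of_le_of_finrank_le h2 (by rw [h1]; exact hr.le)]
    exact hrange m
  have hT2 : ∀ t, ∀ x ∈ initSpan F o t, T 2 x ∈ initSpan F w (2 * t) := by
    intro t x hx
    refine Submodule.span_induction (p := fun x _ => T 2 x ∈ initSpan F w (2 * t)) ?_ ?_ ?_ ?_ hx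
    · rintro _ ⟨s, hs, rfl⟩
      have hs : s < t := hs
      simp only [ho]
      rw [hc.t2o _ (odd_two_mul_add_one s)]
      exact add_mem (Submodule.smul_mem _ _ (mem_initSpan (by omega)))
        (Submodule.smul_mem _ _ (mem_initSpan (by omega)))
    · simp
    · intro x y _ _ hx hy
      rw [map_add]; exact add_mem hx hy
    · intro a x _ hx
      rw [map_smul]; exact Submodule.smul_mem _ _ hx
  have hK := fun i (hi : i ≤ 2 * m + 1) =>
    coef_K hq (h.ne 0) (h.ne 1) (h.ne 2) (h.ne 3) hp hi
  -- The coefficient of the last odd vector in a `k₂⁻¹`-eigenvector of `T₂` vanishes, since the diagonal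
  -- entry of `T₂` at `2t + 1` differs from `k₂⁻¹`.
  have hzero : ∀ t ≤ m, ∀ u ∈ initSpan F o t, T 2 u = (k 2)⁻¹ • u → u = 0 := by
    intro t
    induction t with
    | zero =>
      intro _ u hu _
      rwa [initSpan_zero, Submodule.mem_bot] at hu
    | succ t ih =>
      intro ht u hu h2
      rw [initSpan_succ, Submodule.mem_sup] at hu
      obtain ⟨u', hu', z, hz, rfl⟩ := hu
      obtain ⟨c, rfl⟩ := Submodule.mem_span_singleton.1 hz
      have hcz : c = 0 := by
        by_contra hc0
        have h3 := hc.t2o (2 * t + 1) (odd_two_mul_add_one t)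
        rw [Nat.add_sub_cancel, hK _ (by omega)] at h3
        obtain ⟨a, ha⟩ : ∃ a, T 2 (w (2 * t + 1)) = a • w (2 * t) +
            (k 2 + (k 2)⁻¹ - ((k 2)⁻¹ * (q ^ (2 * m + 1 - (2 * t + 1)))⁻¹)⁻¹) • w (2 * t + 1) :=
          ⟨_, h3⟩
        have h4 : (c * (k 2 - ((k 2)⁻¹ * (q ^ (2 * m + 1 - (2 * t + 1)))⁻¹)⁻¹)) • w (2 * t + 1) =
            (k 2)⁻¹ • u' - T 2 u' - (c * a) • w (2 * t) := by
          simp only [ho, map_add, map_smul, ha] at h2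
          linear_combination (norm := module) h2
        have h5 : (c * (k 2 - ((k 2)⁻¹ * (q ^ (2 * m + 1 - (2 * t + 1)))⁻¹)⁻¹)) • w (2 * t + 1) ∈
            initSpan F w (2 * t + 1) := by
          rw [h4]
          exact sub_mem (sub_mem (Submodule.smul_mem _ _
            (initSpan_mono w (Nat.le_succ _) (hle t hu')))
            (initSpan_mono w (Nat.le_succ _) (hT2 t _ hu')))
            (Submodule.smul_mem _ _ (mem_initSpan (Nat.lt_succ_self _)))
        rw [Submodule.smul_mem_iff] at h5
        · exact hfr _ (by omega) h5
        · refine mul_ne_zero hc0 (sub_ne_zero.2 fun h6 => ?_)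
          rw [mul_inv, inv_inv, inv_inv] at h6
          exact hroot (2 * m + 1 - (2 * t + 1)) (by omega) (mul_left_cancel₀ (h.ne 2) (by rw [← h6, mul_one]))
      subst hcz
      rw [zero_smul, add_zero] at h2 ⊢
      exact ih (by omega) u' hu' h2
  refine hzero m le_rfl _ hmem ?_
  change T 2 (w (2 * m + 1)) = (k 2)⁻¹ • w (2 * m + 1)
  rw [hc.t2o _ (odd_two_mul_add_one m), hK _ le_rfl, Nat.sub_self]
  simp

/-- A chain that is a basis `v₀, …, v_d` followed by zeros identifies the module with `O(k₀,k₁,k₂,k₃)`. -/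
theorem Chain.exists_isO {q : F} (hq : q ≠ 0) {k : ZMod 4 → F} (hn : ∀ i, k i ≠ 0) {d : ℕ}
    (hd : Even d) (hp : k 0 * k 1 * k 2 * k 3 = (q ^ (d + 1))⁻¹)
    {T' : ZMod 4 → Module.End F N} {v : ℕ → N}
    (h : Chain q (k 0) (k 1) (k 2) (k 3) T' v) (hN : Module.finrank F N = d + 1)
    (htop : initSpan F v (d + 1) = ⊤) (hz : ∀ i, d < i → v i = 0) :
    ∃ T : ZMod 4 → Module.End F (Fin (d + 1) → F),
      IsO q (k 0) (k 1) (k 2) (k 3) d T ∧ Iso T T' := by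
  have : FiniteDimensional F N := Module.finite_of_finrank_pos (by omega)
  set L : (Fin (d + 1) → F) →ₗ[F] N :=
    (Pi.basisFun F (Fin (d + 1))).constr F fun i : Fin (d + 1) => v i with hL
  have hLe : ∀ i, L (e F d i) = v i := by
    intro i
    rcases Nat.lt_or_ge i (d + 1) with hi | hi
    · rw [e_basis ⟨i, hi⟩, hL, Module.Basis.constr_basis]
    · rw [e_eq_zero hi, map_zero, hz i hi]
  have hsurj : Function.Surjective L := by
    rw [← LinearMap.range_eq_top, eq_top_iff, ← htop]
    refine Submodule.span_le.2 ?_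
    rintro _ ⟨i, -, rfl⟩
    exact ⟨_, hLe i⟩
  have hinj : Function.Injective L :=
    (LinearMap.injective_iff_surjective_of_finrank_eq_finrank (by rw [hN]; simp)).2 hsurj
  set S := LinearEquiv.ofBijective L ⟨hinj, hsurj⟩ with hS
  have hSe : ∀ i, S.symm (v i) = e F d i := by
    intro i
    rw [LinearEquiv.symm_apply_eq]
    exact (hLe i).symm
  have hc := h.map (T' := fun i => S.symm.conj (T' i)) S.symm.toLinearMap (fun i x => by
    simp [LinearEquiv.conj_apply])
  refine ⟨fun i => S.symm.conj (T' i), ?_, S, fun i x => by simp [LinearEquiv.conj_apply]⟩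
  refine Chain.isO hq (hn 0) (hn 1) (hn 2) (hn 3) hd hp ?_
  have : (fun i => S.symm.toLinearMap (v i)) = e F d := funext hSe
  rwa [this] at hc

/-- Every irreducible representation of odd dimension `d + 1` is some `O(k₀,k₁,k₂,k₃)` with parameters
in `OP_d`. -/
theorem classify [IsAlgClosed F] {q : F} (hq : q ≠ 0) (hroot : ∀ n : ℕ, 1 ≤ n → q ^ n ≠ 1) {d : ℕ}
    (hd : Even d) {T' : ZMod 4 → Module.End F N} (hrep : IsRep q T') (hirr : Irred T')
    (hN : Module.finrank F N = d + 1) :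
    ∃ k0 k1 k2 k3 : F, OPmem q d k0 k1 k2 k3 ∧ ∃ T : ZMod 4 → Module.End F (Fin (d + 1) → F),
      IsO q k0 k1 k2 k3 d T ∧ Iso T T' := by
  have : FiniteDimensional F N := Module.finite_of_finrank_pos (by omega)
  obtain ⟨m, rfl⟩ : ∃ m, d = 2 * m := hd.exists_two_nsmul d |>.imp fun m hm => by simpa using hm
  obtain ⟨k, h, hr⟩ := exists_quad hrep hirr hN
  have hg : ∀ x : N, x ≠ 0 → Generates T' x := fun x hx P hP hxP =>
    (hirr.2 P hP).resolve_left fun hb => hx (by rwa [hb, Submodule.mem_bot] at hxP)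
  have hp : k 0 * k 1 * k 2 * k 3 = (q ^ (2 * m + 1))⁻¹ := by
    have := h.det_prod
    have hdet := fun i => (h.rk_det hq hg hN hr i).2
    rwa [hdet, hdet, hdet, hdet, hN, inv_pow] at this
  have hsq : ∀ ε : ZMod 4, ∀ i : ℕ, Even i → 2 ≤ i → i ≤ 2 * m → k ε ^ 2 ≠ (q ^ i)⁻¹ := by
    intro ε i h1 h2 h3
    have := (h.twist ε).sq_ne hq hroot (fun x hx => generates_twist (hg x hx) ε) hN
      (fun i => hr (i + ε)) h1 h2 h3
    rwa [zero_add] at this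
  refine ⟨k 0, k 1, k 2, k 3, ⟨h.ne 0, h.ne 1, h.ne 2, h.ne 3, hp, fun i h1 h2 h3 =>
    ⟨hsq 0 i h1 h2 h3, hsq 1 i h1 h2 h3, hsq 2 i h1 h2 h3, hsq 3 i h1 h2 h3⟩⟩, ?_⟩
  obtain ⟨v, hv, h0, h3⟩ := exists_common_eigenvector (q := q) hN hr 0 3
  have hc := chainSeq_chain hq h h0 h3
  have htop := (hc.initSpan_finrank (hg v hv)).2
  rw [hN] at htop
  exact hc.exists_isO hq h.ne hd hp hN htop (chainSeq_eq_zero hq hroot h hN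
    (h.rk_det hq hg hN hr 1).1 hp h0 h3 (hg v hv))

end

/-- classification of the odd-dimensional irreducible representations of `H_q`. -/
theorem statement5 [IsAlgClosed F] (q : F) (hq : q ≠ 0)
    (hroot : ∀ n : ℕ, 1 ≤ n → q ^ n ≠ 1)
    (d : ℕ) (hd : Even d) :
    (∀ k0 k1 k2 k3 : F, OPmem q d k0 k1 k2 k3 →
      ∀ T : ZMod 4 → Module.End F (Fin (d + 1) → F), IsO q k0 k1 k2 k3 d T →
        IsRep q T ∧ Irred T ∧ Module.finrank F (Fin (d + 1) → F) = d + 1) ∧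
    (∀ (V : Type u) [AddCommGroup V] [Module F V]
        (T' : ZMod 4 → Module.End F V),
      IsRep q T' → Irred T' → Module.finrank F V = d + 1 →
      ∃ k0 k1 k2 k3 : F, OPmem q d k0 k1 k2 k3 ∧
        ∃ T : ZMod 4 → Module.End F (Fin (d + 1) → F),
          IsO q k0 k1 k2 k3 d T ∧ Iso T T') ∧
    (∀ (k0 k1 k2 k3 k0' k1' k2' k3' : F),
      OPmem q d k0 k1 k2 k3 → OPmem q d k0' k1' k2' k3' →
      ∀ T T' : ZMod 4 → Module.End F (Fin (d + 1) → F),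
        IsO q k0 k1 k2 k3 d T → IsO q k0' k1' k2' k3' d T' →
        (Iso T T' ↔ (k0' = k0 ∧ k1' = k1 ∧ k2' = k2 ∧ k3' = k3))) := by
  -- The parameters are packaged as a function on `ZMod 4`, which is `Fin 4` by definition.
  have key : ∀ k0 k1 k2 k3 : F, OPmem q d k0 k1 k2 k3 → ∃ k : ZMod 4 → F,
      k 0 = k0 ∧ k 1 = k1 ∧ k 2 = k2 ∧ k 3 = k3 ∧ (∀ i, k i ≠ 0) ∧
      k 0 * k 1 * k 2 * k 3 = (q ^ (d + 1))⁻¹ ∧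
      ∀ i : ℕ, Even i → 2 ≤ i → i ≤ d → ∀ j, k j ^ 2 ≠ (q ^ i)⁻¹ := by
    rintro k0 k1 k2 k3 ⟨n0, n1, n2, n3, hp, hk⟩
    let k : Fin 4 → F := ![k0, k1, k2, k3]
    exact ⟨k, rfl, rfl, rfl, rfl, zmod4_forall n0 n1 n2 n3, hp, fun i a b c =>
      zmod4_forall (hk i a b c).1 (hk i a b c).2.1 (hk i a b c).2.2.1 (hk i a b c).2.2.2⟩
  refine ⟨?_, fun V _ _ T' hrep hirr hN => classify hq hroot hd hrep hirr hN, ?_⟩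
  · intro k0 k1 k2 k3 hOP T hT
    obtain ⟨k, rfl, rfl, rfl, rfl, hn, hp, hk⟩ := key _ _ _ _ hOP
    have hc := hT.chain hq (hn 0) (hn 1) (hn 2) (hn 3) hd hp
    exact ⟨(hc.quad hq hn (span_e d)).isRep, hc.irred hq hroot hn hd hp hk, by simp⟩
  · intro k0 k1 k2 k3 k0' k1' k2' k3' hOP hOP' T T' hT hT'
    obtain ⟨k, rfl, rfl, rfl, rfl, hn, hp, hk⟩ := key _ _ _ _ hOP
    obtain ⟨k', rfl, rfl, rfl, rfl, hn', hp', hk'⟩ := key _ _ _ _ hOP'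
    have hc := hT.chain hq (hn 0) (hn 1) (hn 2) (hn 3) hd hp
    have hc' := hT'.chain hq (hn' 0) (hn' 1) (hn' 2) (hn' 3) hd hp'
    constructor
    · intro hiso
      have hkk : ∀ i, k' i = k i := fun i => by
        rw [← hc.det_eq hq hroot hn hd hp hk i, ← hc'.det_eq hq hroot hn' hd hp' hk' i, hiso.det_eq]
      exact ⟨hkk 0, hkk 1, hkk 2, hkk 3⟩
    · rintro ⟨h0, h1, h2, h3⟩
      rw [h0, h1, h2, h3] at hc'
      exact ⟨LinearEquiv.refl F _, fun i x => by
        simp [hc.unique hc' (span_e d) i]⟩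

end DAHA
end

section
/- Let F be a field, q a nonzero element of F, and k0,k1,k2,k3 nonzero elements of F. Then the operators T0,T1,T2,T3 on the F-vector space with basis (m_i)_{i≥0} defined in the context satisfy (Ti - ki)(Ti - ki^{-1}) = 0 for i = 0,1,2,3 and T0 T1 T2 T3 = q^{-1}·id. In particular each Ti is invertible, Ti + Ti^{-1} equals the scalar ki + ki^{-1}, and (T0,T1,T2,T3) is an infinite-dimensional representation of the universal DAHA H_q of type (C1^∨,C1), denoted M(k0,k1,k2,k3), on which ti + ti^{-1} acts as the scalar ki + ki^{-1} for i = 0,1,2,3. -/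
/-!
The quadratic relations and the product relation are identities between linear maps, so they are
checked on the basis vectors `m_i`, split as `m_0`, `m_{i+2}`, `m_{i+1}` with `i` even; each case is an identity of rational
functions. The quadratic relations hold because `T₀` fixes the line `⟨m_0⟩` and preserves the planes
`⟨m_{i+1}, m_{i+2}⟩`, and `T₂` preserves the planes `⟨m_i, m_{i+1}⟩`, on each plane with trace
`k + k⁻¹` and determinant `1`, while `T₁` and `T₃` are triangular for the parity grading, with
diagonal scalars `k` (even part) and `k⁻¹` (odd part).

For the product relation, compute `T₂T₃` and `T₀T₁` separately. For even `i`, `T₂T₃` sends `m_i`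
to a multiple of `m_i - m_{i+1}`, which `T₀T₁` sends back to a multiple of `m_i`. For odd `i`,
`T₂T₃` sends `m_i` to a multiple of `m_i` plus a multiple of `m_{i+1} - m_{i+2}`; `T₀T₁` turns these
into multiples of `m_i - m_{i+1}` and of `m_{i+1}`, and the `m_{i+1}` terms cancel.

Everything else is formal: a quadratic relation `(t - k) (t - k⁻¹) = 0` says that
`(k + k⁻¹) - t` is a two-sided inverse of `t` (`isUnit_and_add_inverse`), so that `t + t⁻¹` is a
scalar and hence central.
-/

universe u

namespace DAHA

variable {F : Type*} [Field F]

/-- A root of `(X - k) (X - k⁻¹)` in an algebra is invertible, with inverse `(k + k⁻¹) - t`. -/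
lemma isUnit_and_add_inverse {A : Type*} [Ring A] [Algebra F A] {k : F} (hk : k ≠ 0) {t : A}
    (h : (t - k • 1) * (t - k⁻¹ • 1) = 0) :
    IsUnit t ∧ t + Ring.inverse t = (k + k⁻¹) • 1 := by
  have h' : t * t - k⁻¹ • t - k • t + (1 : A) = 0 := by
    rw [← h]
    simp only [sub_mul, mul_sub, smul_mul_assoc, mul_smul_comm, one_mul, mul_one, smul_smul,
      smul_sub, inv_mul_cancel₀ hk, one_smul]
    abel
  have h1 : t * ((k + k⁻¹) • 1 - t) = 1 := by
    rw [mul_sub, mul_smul_comm, mul_one, add_smul, ← sub_eq_zero, ← neg_eq_zero, ← h']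
    abel
  have h2 : ((k + k⁻¹) • 1 - t) * t = 1 := by
    rw [sub_mul, smul_mul_assoc, one_mul, add_smul, ← sub_eq_zero, ← neg_eq_zero, ← h']
    abel
  let u : Aˣ := ⟨t, (k + k⁻¹) • 1 - t, h1, h2⟩
  have hu : Ring.inverse t = (k + k⁻¹) • 1 - t := Ring.inverse_unit u
  exact ⟨u.isUnit, by rw [hu]; abel⟩

/-- Extensionality for endomorphisms of `ℕ →₀ F`, in the three cases on which each operator of
`M(k₀,k₁,k₂,k₃)` is given by a single formula. -/
lemma end_ext {f g : Module.End F (ℕ →₀ F)} (h0 : f (mv F 0) = g (mv F 0))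
    (he : ∀ i, Even i → f (mv F (i + 2)) = g (mv F (i + 2)))
    (ho : ∀ i, Even i → f (mv F (i + 1)) = g (mv F (i + 1))) : f = g := by
  refine Finsupp.lhom_ext' fun i => LinearMap.ext_ring ?_
  change f (mv F i) = g (mv F i)
  obtain ⟨n, rfl | rfl⟩ := Nat.even_or_odd' i
  · cases n with
    | zero => exact h0
    | succ n => exact he _ (even_two_mul n)
  · exact ho _ (even_two_mul n)

/-- the operators of `M(k₀,k₁,k₂,k₃)` satisfy the quadratic relations,
the product relation, are invertible, `Tᵢ + Tᵢ⁻¹` is the scalar `kᵢ + kᵢ⁻¹`, and they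
form an infinite-dimensional representation of the universal DAHA `H_q`. -/
theorem statement6 (q : F) (hq : q ≠ 0)
    (k0 k1 k2 k3 : F) (hk0 : k0 ≠ 0) (hk1 : k1 ≠ 0) (hk2 : k2 ≠ 0) (hk3 : k3 ≠ 0)
    (T : ZMod 4 → Module.End F (ℕ →₀ F)) (hT : IsM q k0 k1 k2 k3 T) :
    ((T 0 - k0 • 1) * (T 0 - k0⁻¹ • 1) = 0) ∧
    ((T 1 - k1 • 1) * (T 1 - k1⁻¹ • 1) = 0) ∧
    ((T 2 - k2 • 1) * (T 2 - k2⁻¹ • 1) = 0) ∧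
    ((T 3 - k3 • 1) * (T 3 - k3⁻¹ • 1) = 0) ∧
    (T 0 * T 1 * T 2 * T 3 = q⁻¹ • (1 : Module.End F (ℕ →₀ F))) ∧
    (∀ i, IsUnit (T i)) ∧
    (T 0 + Ring.inverse (T 0) = (k0 + k0⁻¹) • 1) ∧
    (T 1 + Ring.inverse (T 1) = (k1 + k1⁻¹) • 1) ∧
    (T 2 + Ring.inverse (T 2) = (k2 + k2⁻¹) • 1) ∧
    (T 3 + Ring.inverse (T 3) = (k3 + k3⁻¹) • 1) ∧
    (¬ FiniteDimensional F (ℕ →₀ F)) ∧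
    IsRep q T := by
  obtain ⟨a1, a2, a3, b1, b2, b3, c1, c2, d1, d2⟩ := hT
  have ev (i : ℕ) (hi : Even i) : Even (i + 2) := by grind
  have od (i : ℕ) (hi : Even i) : Odd (i + 1) ∧ Odd (i + 3) := by grind
  have Q0 : (T 0 - k0 • 1) * (T 0 - k0⁻¹ • 1) = 0 := by
    refine end_ext ?_ (fun i hi => ?_) (fun i hi => ?_)
    · simp [a3]
      match_scalars <;> field_simp <;> ring
    · simp [a1, a2, ev i hi, od i hi, pow_add]
      match_scalars <;> field_simp <;> ring
    · simp [a1, a2, ev i hi, od i hi, pow_add]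
      match_scalars <;> field_simp <;> ring
  have Q1 : (T 1 - k1 • 1) * (T 1 - k1⁻¹ • 1) = 0 := by
    refine end_ext ?_ (fun i hi => ?_) (fun i hi => ?_)
    · simp [b2, b3]
      match_scalars <;> field_simp <;> ring
    · simp [b1, b2, ev i hi, od i hi, pow_add]
      match_scalars <;> field_simp <;> ring
    · simp [b2, od i hi]
  have Q2 : (T 2 - k2 • 1) * (T 2 - k2⁻¹ • 1) = 0 := by
    refine end_ext ?_ (fun i hi => ?_) (fun i hi => ?_)
    · simp [c1, c2]
      match_scalars <;> field_simp <;> ring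
    · simp [c1, c2, ev i hi, od i hi, pow_add]
      match_scalars <;> field_simp <;> ring
    · simp [c1, c2, hi, od i hi, pow_add]
      match_scalars <;> field_simp <;> ring
  have Q3 : (T 3 - k3 • 1) * (T 3 - k3⁻¹ • 1) = 0 := by
    refine end_ext ?_ (fun i hi => ?_) (fun i hi => ?_)
    · simp [d1]
      match_scalars <;> field_simp <;> ring
    · simp [d1, ev i hi]
      match_scalars <;> field_simp <;> ring
    · simp [d1, d2, hi, ev i hi, od i hi, pow_add]
      match_scalars <;> field_simp <;> ring
  -- Computing `T₂T₃` and `T₀T₁` first keeps the four-fold product small: `k₂` and `k₃` drop out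
  -- of the former.
  have R23e (i : ℕ) (hi : Even i) : T 2 (T 3 (mv F i)) =
      (k0⁻¹ * k1⁻¹ * (q ^ (i + 1))⁻¹) • (mv F i - mv F (i + 1)) := by
    rw [d1 i hi, map_smul, c1 i hi]
    match_scalars <;> field_simp
  have R23o (i : ℕ) (hi : Even i) : T 2 (T 3 (mv F (i + 1))) =
      (k0 * k1 * q ^ (i + 1)) • mv F (i + 1)
        + (k0⁻¹ * k1⁻¹ * (q ^ (i + 3))⁻¹) • (mv F (i + 2) - mv F (i + 3)) := by
    simp [c1, c2, d2, hi, ev i hi, od i hi, pow_add]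
    match_scalars <;> field_simp <;> ring
  have R01o (i : ℕ) (hi : Even i) : T 0 (T 1 (mv F (i + 1))) =
      (k0⁻¹ * k1⁻¹ * (q ^ (i + 2))⁻¹) • (mv F (i + 1) - mv F (i + 2)) := by
    rw [b2 _ (od i hi).1, map_smul, a2 _ (od i hi).1, smul_smul]
    congr 1
    ring
  have R01e (i : ℕ) (hi : Even i) : T 0 (T 1 (mv F (i + 2) - mv F (i + 3))) =
      (k0 * k1 * q ^ (i + 2)) • mv F (i + 2) := by
    simp [a1, a2, b1, b2, ev i hi, od i hi, pow_add]
    match_scalars <;> field_simp <;> ring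
  have R01z : T 0 (T 1 (mv F 0 - mv F 1)) = (k0 * k1) • mv F 0 := by
    simp [a3, b2, b3, smul_smul, mul_comm]
  have P : T 0 * T 1 * T 2 * T 3 = q⁻¹ • (1 : Module.End F (ℕ →₀ F)) := by
    refine end_ext ?_ (fun i hi => ?_) (fun i hi => ?_) <;>
      simp only [Module.End.mul_apply, LinearMap.smul_apply, Module.End.one_apply]
    · rw [R23e 0 Even.zero, map_smul, map_smul, R01z, zero_add, pow_one]
      match_scalars
      field_simp
    · rw [R23e _ (ev i hi), map_smul, map_smul, R01e i hi]
      match_scalars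
      field_simp
      ring
    · rw [R23o i hi, map_add, map_add, map_smul, map_smul, map_smul, map_smul, R01o i hi,
        R01e i hi]
      match_scalars <;> field_simp <;> ring
  obtain ⟨u0, i0⟩ := isUnit_and_add_inverse (t := T 0) hk0 Q0
  obtain ⟨u1, i1⟩ := isUnit_and_add_inverse (t := T 1) hk1 Q1
  obtain ⟨u2, i2⟩ := isUnit_and_add_inverse (t := T 2) hk2 Q2
  obtain ⟨u3, i3⟩ := isUnit_and_add_inverse (t := T 3) hk3 Q3
  have U : ∀ i, IsUnit (T i) := by
    intro i
    fin_cases i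
    exacts [u0, u1, u2, u3]
  have C : ∀ i j, Commute (T i + Ring.inverse (T i)) (T j) := by
    have key (i : ZMod 4) (c : F) (h : T i + Ring.inverse (T i) = c • 1) (j : ZMod 4) :
        Commute (T i + Ring.inverse (T i)) (T j) := by
      rw [h]
      exact (Commute.one_left _).smul_left c
    intro i
    fin_cases i
    exacts [key 0 _ i0, key 1 _ i1, key 2 _ i2, key 3 _ i3]
  have I : ¬ FiniteDimensional F (ℕ →₀ F) := fun _ =>
    not_finite_iff_infinite.2 (inferInstance : Infinite ℕ)
      (Module.Finite.finite_basis (Finsupp.basisSingleOne (R := F) (ι := ℕ)))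
  exact ⟨Q0, Q1, Q2, Q3, P, U, i0, i1, i2, i3, I, U, C, P⟩

end DAHA
end

section
/- Let k0,k1,k2,k3 be nonzero elements of F and let (M0,M1,M2,M3) denote the operator quadruple of the representation M(k0,k1,k2,k3). If (T0,T1,T2,T3) is any representation of H_q on an F-vector space V and v ∈ V satisfies T0 v = k0 v, T3 v = k3 v, (T1 + T1^{-1}) v = (k1 + k1^{-1}) v, and (T2 + T2^{-1}) v = (k2 + k2^{-1}) v, then there exists a unique F-linear map φ : M(k0,k1,k2,k3) → V such that φ(m_0) = v and φ ∘ Mi = Ti ∘ φ for i = 0,1,2,3. -/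
/-!
A homomorphism `φ` out of `M(k₀,k₁,k₂,k₃)` is forced by `φ m₀ = v`: the formula for `T₂ m_i`
(`i` even) or `T₀ m_i` (`i` odd) expresses `m_{i+1}` through `m_i` and one operator applied to it.
Reading these formulas in `V` defines vectors `w_i` (`ladder`), and existence amounts to checking
that the `w_i` satisfy the remaining formulas.

All `w_i` lie in the common eigenspace of the central elements `T_a + T_a⁻¹` (`central_ladder`), so
there each `T_a⁻¹` is a scalar minus `T_a`. The other ingredients are the relation
`T₀ T₁ T₂ T₃ = q⁻¹` and its cyclic rotation `T₃ T₀ T₁ T₂ = q⁻¹`, which give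
`T₁ T₂ T₃ = q⁻¹ T₀⁻¹` and `T₃ T₀ T₁ = q⁻¹ T₂⁻¹`. With these the formulas propagate
from `w_i` to `w_{i+1}`; the computation is the same for even and odd `i` once the operators and
parameters are renamed (`step`), and the induction is carried by `EvenInv` and `OddInv`.
-/


universe u

namespace DAHA

variable {F : Type*} [Field F]

/-! ### The recursion step -/

/-- One step of the recursion, in a form covering both parities. The operators `A`, `P`, `Q`, `R`
stand for `T₁, T₀, T₂, T₃` at an even index and for `T₃, T₂, T₀, T₁` at an odd one, a prime
marks an inverse, and `x, y, z` are three consecutive vectors. The vector `x` occurs only through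
`E • x`, so that at index `0`, where `E = 0`, it may be arbitrary. -/
lemma step {V : Type*} [AddCommGroup V] [Module F V] (A A' P P' Q Q' R : Module.End F V)
    {q s s' ρ μ d E : F} (hq : q ≠ 0) (hρ : ρ ≠ 0) (hμ : μ ≠ 0) (hd : d ≠ 0) {x y z : V}
    (hAA : ∀ t, A' (A t) = t) (hQQ : ∀ t, Q' (Q t) = t)
    (hcyc : ∀ t, A (Q (R t)) = q⁻¹ • P' t)
    (hPs : P y + P' y = s • y) (hQs : Q (Q y) + Q' (Q y) = s' • Q y)
    (hAs : A y + A' y = (μ + μ⁻¹) • y)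
    (hR : R y = ρ • y) (hP : P y = (d⁻¹ * E) • x + (s - d⁻¹) • y)
    (hx : A (E • x) = μ⁻¹ • E • x) (hz : z = y - (μ * ρ * q * d) • Q y) :
    A y = (-(μ * E)) • x + μ • y + μ⁻¹ • z ∧ A z = μ⁻¹ • z ∧
    Q z = ((μ * ρ * q * d)⁻¹ * (1 - s' * (μ * ρ * q * d) + (μ * ρ * q * d) ^ 2)) • y
      + (s' - (μ * ρ * q * d)⁻¹) • z := by
  have hP' : P' y = d⁻¹ • y - (d⁻¹ * E) • x := by
    rw [← add_right_inj (P y), hPs, hP]; module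
  have hAQ : A (Q y) = (ρ⁻¹ * q⁻¹ * d⁻¹) • (y - E • x) := by
    have h := hcyc y
    rw [hR, map_smul, map_smul, hP'] at h
    rw [← inv_smul_smul₀ hρ (A (Q y)), h]; module
  have hA'x : A' (E • x) = μ • E • x := by
    have h := hAA (E • x)
    rw [hx, map_smul] at h
    rw [← smul_inv_smul₀ hμ (A' (E • x)), h]
  -- Since `A (y - z) = μ • y - μ • E • x`, the vector `A⁻¹ y` is a combination of `x`, `y`, `z`.
  have hA'y : A' y = (ρ * q * d) • Q y + (μ * E) • x := by
    have h := congrArg A' hAQ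
    rw [hAA, map_smul, map_sub, hA'x] at h
    rw [h]; match_scalars <;> field_simp <;> ring
  have hAy : A y = (-(μ * E)) • x + μ • y + μ⁻¹ • z := by
    rw [← add_left_inj (A' y), hAs, hA'y, hz]
    match_scalars <;> field_simp <;> ring
  refine ⟨hAy, ?_, ?_⟩
  · have h : A z = A y - (μ * ρ * q * d) • A (Q y) := by rw [hz, map_sub, map_smul]
    rw [h, hAQ, hAy]
    match_scalars <;> field_simp <;> ring
  · have hQ2 : Q (Q y) = s' • Q y - y := by rw [← hQs, hQQ]; abel
    have h : Q z = Q y - (μ * ρ * q * d) • Q (Q y) := by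
      conv_lhs => rw [hz]
      rw [map_sub, map_smul]
    rw [h, hQ2, hz]
    match_scalars <;> field_simp <;> ring

/-! ### The images of the basis vectors -/

/-- The candidate images of the basis vectors `m_i` in `V`: the formula for `T₂ m_i` (`i` even),
respectively `T₀ m_i` (`i` odd), in `IsM` is solved for `m_{i+1}`. -/
def ladder {V : Type*} [AddCommGroup V] [Module F V] (q k0 k1 k3 : F)
    (T : ZMod 4 → Module.End F V) (v : V) : ℕ → V
  | 0 => v
  | i + 1 =>
    if Even i then
      ladder q k0 k1 k3 T v i - (k0 * k1 * k3 * q ^ (i + 1)) • T 2 (ladder q k0 k1 k3 T v i)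
    else ladder q k0 k1 k3 T v i - (k0 * q ^ (i + 1)) • T 0 (ladder q k0 k1 k3 T v i)

section Ladder

variable {V : Type*} [AddCommGroup V] [Module F V] {q k0 k1 k2 k3 : F}
  {T : ZMod 4 → Module.End F V} {v : V}

lemma ladder_even {i : ℕ} (h : Even i) : ladder q k0 k1 k3 T v (i + 1) =
    ladder q k0 k1 k3 T v i - (k0 * k1 * k3 * q ^ (i + 1)) • T 2 (ladder q k0 k1 k3 T v i) := by
  rw [ladder, if_pos h]

lemma ladder_odd {i : ℕ} (h : Odd i) : ladder q k0 k1 k3 T v (i + 1) =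
    ladder q k0 k1 k3 T v i - (k0 * q ^ (i + 1)) • T 0 (ladder q k0 k1 k3 T v i) := by
  rw [ladder, if_neg (Nat.not_even_iff_odd.2 h)]

lemma inv_apply (hT : IsRep q T) (a : ZMod 4) (t : V) : Ring.inverse (T a) (T a t) = t := by
  rw [← Module.End.mul_apply, Ring.inverse_mul_cancel _ (hT.1 a), Module.End.one_apply]

lemma apply_inv (hT : IsRep q T) (a : ZMod 4) (t : V) : T a (Ring.inverse (T a) t) = t := by
  rw [← Module.End.mul_apply, Ring.mul_inverse_cancel _ (hT.1 a), Module.End.one_apply]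

lemma cyc0 (hT : IsRep q T) (t : V) : T 0 (T 1 (T 2 (T 3 t))) = q⁻¹ • t := by
  simpa using congrArg (fun f : Module.End F V => f t) hT.2.2

lemma cyc_even (hT : IsRep q T) (t : V) :
    T 1 (T 2 (T 3 t)) = q⁻¹ • Ring.inverse (T 0) t := by
  rw [← inv_apply hT 0 (T 1 _), cyc0 hT, map_smul]

lemma cyc_odd (hT : IsRep q T) (t : V) :
    T 3 (T 0 (T 1 t)) = q⁻¹ • Ring.inverse (T 2) t := by
  have h := cyc0 hT (Ring.inverse (T 3) (Ring.inverse (T 2) t))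
  rw [apply_inv hT, apply_inv hT] at h
  rw [h, map_smul, apply_inv hT]

/-- As `T_a + T_a⁻¹` is central, its eigenspaces are stable under every `T_b`. -/
lemma central_apply (hT : IsRep q T) {a : ZMod 4} (b : ZMod 4) {s : F} {t : V}
    (h : T a t + Ring.inverse (T a) t = s • t) :
    T a (T b t) + Ring.inverse (T a) (T b t) = s • T b t := by
  have hc := congrArg (fun f : Module.End F V => f t) (hT.2.1 a b).eq
  simp only [Module.End.mul_apply, LinearMap.add_apply] at hc
  rw [hc, h, map_smul]

lemma central_ladder (hT : IsRep q T) {a : ZMod 4} {s : F}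
    (h : T a v + Ring.inverse (T a) v = s • v) (i : ℕ) :
    T a (ladder q k0 k1 k3 T v i) + Ring.inverse (T a) (ladder q k0 k1 k3 T v i)
      = s • ladder q k0 k1 k3 T v i := by
  have key : ∀ (b : ZMod 4) (c : F) (t : V), T a t + Ring.inverse (T a) t = s • t →
      T a (t - c • T b t) + Ring.inverse (T a) (t - c • T b t) = s • (t - c • T b t) := by
    intro b c t ht
    have hb := central_apply hT b ht
    rw [smul_sub, smul_comm s c, ← hb, ← ht]
    simp only [map_sub, map_smul]
    module
  induction i with
  | zero => exact h
  | succ i ih =>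
    rcases Nat.even_or_odd i with hi | hi
    · rw [ladder_even hi]; exact key _ _ _ ih
    · rw [ladder_odd hi]; exact key _ _ _ ih

lemma central_of_eigen (hT : IsRep q T) {a : ZMod 4} {k : F} (hk : k ≠ 0)
    (h : T a v = k • v) : T a v + Ring.inverse (T a) v = (k + k⁻¹) • v := by
  have h' := inv_apply hT a v
  rw [h, map_smul] at h'
  rw [← inv_smul_smul₀ hk (Ring.inverse (T a) v), h', h, add_smul]

/-! ### Propagating the formulas along the ladder -/

/-- What is known about the ladder at an even index `i` before the step to `i + 1`. At `i = 0`
the index `i - 1` truncates to `0`, which is harmless because its coefficient `1 - q ^ i`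
vanishes. -/
def EvenInv (q k0 k1 k3 : F) (T : ZMod 4 → Module.End F V) (w : ℕ → V) (i : ℕ) : Prop :=
  T 3 (w i) = k3 • w i ∧
  T 0 (w i) = ((k0 * q ^ i)⁻¹ * ((1 - q ^ i) * (1 - k0 ^ 2 * q ^ i))) • w (i - 1)
    + (k0 + k0⁻¹ - (k0 * q ^ i)⁻¹) • w i ∧
  T 1 (((1 - q ^ i) * (1 - k0 ^ 2 * q ^ i)) • w (i - 1))
    = k1⁻¹ • ((1 - q ^ i) * (1 - k0 ^ 2 * q ^ i)) • w (i - 1)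

/-- What is known about the ladder at an odd index `i` before the step to `i + 1`. -/
def OddInv (q k0 k1 k2 k3 : F) (T : ZMod 4 → Module.End F V) (w : ℕ → V) (i : ℕ) : Prop :=
  T 1 (w i) = k1⁻¹ • w i ∧
  T 2 (w i) = ((k0 * k1 * k3 * q ^ i)⁻¹ * ((k0 * k1 * k3 * q ^ i - k2)
      * (k0 * k1 * k3 * q ^ i - k2⁻¹))) • w (i - 1)
    + (k2 + k2⁻¹ - (k0 * k1 * k3 * q ^ i)⁻¹) • w i ∧
  T 3 (w (i - 1)) = k3 • w (i - 1)

variable (hq : q ≠ 0) (hk0 : k0 ≠ 0) (hk1 : k1 ≠ 0) (hk2 : k2 ≠ 0) (hk3 : k3 ≠ 0)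
  (hT : IsRep q T) (hv0 : T 0 v = k0 • v) (hv3 : T 3 v = k3 • v)
  (hv1 : (T 1 + Ring.inverse (T 1)) v = (k1 + k1⁻¹) • v)
  (hv2 : (T 2 + Ring.inverse (T 2)) v = (k2 + k2⁻¹) • v)

include hq hk0 hk1 hk3 hT hv0 hv2

include hk2 hv1 in
lemma even_step {i : ℕ} (hi : Even i)
    (h : EvenInv q k0 k1 k3 T (ladder q k0 k1 k3 T v) i) :
    OddInv q k0 k1 k2 k3 T (ladder q k0 k1 k3 T v) (i + 1) ∧
    T 1 (ladder q k0 k1 k3 T v i)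
      = (-(k1 * ((1 - q ^ i) * (1 - k0 ^ 2 * q ^ i)))) • ladder q k0 k1 k3 T v (i - 1)
        + k1 • ladder q k0 k1 k3 T v i + k1⁻¹ • ladder q k0 k1 k3 T v (i + 1) := by
  obtain ⟨h3, h0, h1⟩ := h
  have hc : k1 * k3 * q * (k0 * q ^ i) = k0 * k1 * k3 * q ^ (i + 1) := by ring
  have c2 := central_ladder (k0 := k0) (k1 := k1) (k3 := k3) hT hv2 i
  obtain ⟨e1, e2, e3⟩ := step (T 1) (Ring.inverse (T 1)) (T 0) (Ring.inverse (T 0)) (T 2)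
    (Ring.inverse (T 2)) (T 3) hq hk3 hk1 (mul_ne_zero hk0 (pow_ne_zero i hq))
    (inv_apply hT 1) (inv_apply hT 2) (cyc_even hT)
    (central_ladder hT (central_of_eigen hT hk0 hv0) i)
    (central_apply hT 2 c2) (central_ladder hT hv1 i) h3 h0 h1
    (hc ▸ ladder_even (q := q) (k0 := k0) (k1 := k1) (k3 := k3) (T := T) (v := v) hi)
  refine ⟨⟨e2, ?_, h3⟩, e1⟩
  rw [e3, hc, Nat.add_sub_cancel]
  congr 3
  field_simp
  ring

include hv3 in
lemma odd_step {i : ℕ} (hi : Odd i)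
    (h : OddInv q k0 k1 k2 k3 T (ladder q k0 k1 k3 T v) i) :
    EvenInv q k0 k1 k3 T (ladder q k0 k1 k3 T v) (i + 1) ∧
    T 3 (ladder q k0 k1 k3 T v i)
      = (-(k3⁻¹ * ((k0 * k1 * k3 * q ^ i - k2) * (k0 * k1 * k3 * q ^ i - k2⁻¹))))
          • ladder q k0 k1 k3 T v (i - 1)
        + k3⁻¹ • ladder q k0 k1 k3 T v i + k3 • ladder q k0 k1 k3 T v (i + 1) := by
  obtain ⟨h1, h2, h3⟩ := h
  have hc : k3⁻¹ * k1⁻¹ * q * (k0 * k1 * k3 * q ^ i) = k0 * q ^ (i + 1) := by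
    field_simp; ring
  have c0 := central_ladder (q := q) (k0 := k0) (k1 := k1) (k3 := k3) hT
    (central_of_eigen hT hk0 hv0) i
  have c3 := central_ladder (q := q) (k0 := k0) (k1 := k1) (k3 := k3) hT
    (central_of_eigen hT hk3 hv3) i
  have hs : k3 + k3⁻¹ = k3⁻¹ + k3⁻¹⁻¹ := by rw [inv_inv, add_comm]
  rw [hs] at c3
  obtain ⟨e1, e2, e3⟩ := step (T 3) (Ring.inverse (T 3)) (T 2) (Ring.inverse (T 2)) (T 0)
    (Ring.inverse (T 0)) (T 1) hq (inv_ne_zero hk1) (inv_ne_zero hk3)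
    (mul_ne_zero (mul_ne_zero (mul_ne_zero hk0 hk1) hk3) (pow_ne_zero i hq))
    (inv_apply hT 3) (inv_apply hT 0) (cyc_odd hT) (central_ladder hT hv2 i)
    (central_apply hT 0 c0) c3 h1 h2 (by rw [map_smul, h3, inv_inv, smul_comm])
    (hc ▸ ladder_odd (q := q) (k0 := k0) (k1 := k1) (k3 := k3) (T := T) (v := v) hi)
  rw [inv_inv] at e1 e2
  refine ⟨⟨e2, ?_, ?_⟩, e1⟩
  · rw [e3, hc, Nat.add_sub_cancel]
    congr 3
    field_simp
    ring
  · rw [map_smul, Nat.add_sub_cancel, h1, smul_comm]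

include hk2 hv1 hv3 in
lemma ladder_inv (i : ℕ) :
    (Even i → EvenInv q k0 k1 k3 T (ladder q k0 k1 k3 T v) i) ∧
    (Odd i → OddInv q k0 k1 k2 k3 T (ladder q k0 k1 k3 T v) i) := by
  induction i with
  | zero =>
    refine ⟨fun _ => ⟨hv3, ?_, by simp⟩, fun h => absurd h (by decide)⟩
    change T 0 v = _
    simp [hv0, ladder]
  | succ i ih =>
    refine ⟨fun h => ?_, fun h => ?_⟩
    · have hi : Odd i := by grind
      exact (odd_step hq hk0 hk1 hk3 hT hv0 hv3 hv2 hi (ih.2 hi)).1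
    · have hi : Even i := by grind
      exact (even_step hq hk0 hk1 hk2 hk3 hT hv0 hv1 hv2 hi (ih.1 hi)).1

end Ladder

/-! ### The universal property -/

/-- the universal property of `M(k₀,k₁,k₂,k₃)`. -/
theorem statement7 (q : F) (hq : q ≠ 0)
    (k0 k1 k2 k3 : F) (hk0 : k0 ≠ 0) (hk1 : k1 ≠ 0) (hk2 : k2 ≠ 0) (hk3 : k3 ≠ 0)
    (M : ZMod 4 → Module.End F (ℕ →₀ F)) (hM : IsM q k0 k1 k2 k3 M)
    (V : Type u) [AddCommGroup V] [Module F V]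
    (T : ZMod 4 → Module.End F V) (hT : IsRep q T) (v : V)
    (hv0 : T 0 v = k0 • v) (hv3 : T 3 v = k3 • v)
    (hv1 : (T 1 + Ring.inverse (T 1)) v = (k1 + k1⁻¹) • v)
    (hv2 : (T 2 + Ring.inverse (T 2)) v = (k2 + k2⁻¹) • v) :
    ∃! φ : (ℕ →₀ F) →ₗ[F] V,
      φ (mv F 0) = v ∧ ∀ i x, φ (M i x) = T i (φ x) := by
  obtain ⟨M0e, M0o, M00, M1e, M1o, M10, M2e, M2o, M3e, M3o⟩ := hM
  have hinv := ladder_inv hq hk0 hk1 hk2 hk3 hT hv0 hv3 hv1 hv2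
  have hT1 := fun i hi => (even_step hq hk0 hk1 hk2 hk3 hT hv0 hv1 hv2 hi ((hinv i).1 hi)).2
  have hT3 := fun i hi => (odd_step hq hk0 hk1 hk3 hT hv0 hv3 hv2 hi ((hinv i).2 hi)).2
  have hT2 := fun i hi => ladder_even (q := q) (k0 := k0) (k1 := k1) (k3 := k3)
    (T := T) (v := v) (i := i) hi
  have hT0 := fun i hi => ladder_odd (q := q) (k0 := k0) (k1 := k1) (k3 := k3)
    (T := T) (v := v) (i := i) hi
  have hw0 : ladder q k0 k1 k3 T v 0 = v := rfl
  generalize ladder q k0 k1 k3 T v = w at *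
  have hL : ∀ i, Finsupp.linearCombination F w (mv F i) = w i := fun i => by simp [mv]
  refine ⟨Finsupp.linearCombination F w, ⟨(hL 0).trans hw0, fun a x => ?_⟩, ?_⟩
  · suffices h : Finsupp.linearCombination F w ∘ₗ M a = T a ∘ₗ Finsupp.linearCombination F w from
      LinearMap.congr_fun h x
    refine Finsupp.lhom_ext' fun i => LinearMap.ext_ring ?_
    change Finsupp.linearCombination F w (M a (mv F i))
      = T a (Finsupp.linearCombination F w (mv F i))
    rw [hL]
    rcases Nat.even_or_odd i with hi | hi
    · obtain ⟨h3, h0, -⟩ := (hinv i).1 hi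
      have h1 := hT1 i hi
      have h2 := hT2 i hi
      -- The formulas for `T₀ m_i` and `T₁ m_i` hold for every even `i`: at `i = 0` the
      -- coefficient of `m_{i-1}` vanishes.
      have m0 : M 0 (mv F i) = (k0⁻¹ * (q ^ i)⁻¹ * (1 - q ^ i) * (1 - k0 ^ 2 * q ^ i)) •
          mv F (i - 1) + (k0 + k0⁻¹ - k0⁻¹ * (q ^ i)⁻¹) • mv F i := by
        rcases i with _ | i
        · simp [M00]
        · exact M0e _ hi (by grind)
      have m1 : M 1 (mv F i) = (-(k1 * (1 - q ^ i) * (1 - k0 ^ 2 * q ^ i))) • mv F (i - 1)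
          + k1 • mv F i + k1⁻¹ • mv F (i + 1) := by
        rcases i with _ | i
        · simp [M10]
        · exact M1e _ hi (by grind)
      fin_cases a
      · change Finsupp.linearCombination F w (M 0 _) = T 0 (w i)
        rw [h0, m0]
        simp only [map_add, map_smul, hL]
        match_scalars <;> field_simp
      · change Finsupp.linearCombination F w (M 1 _) = T 1 (w i)
        rw [h1, m1]
        simp only [map_add, map_smul, hL]
        module
      · change Finsupp.linearCombination F w (M 2 _) = T 2 (w i)
        rw [M2e i hi]
        simp only [map_sub, map_smul, hL, h2]
        match_scalars <;> field_simp <;> ring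
      · change Finsupp.linearCombination F w (M 3 _) = T 3 (w i)
        rw [h3, M3e i hi, map_smul, hL]
    · obtain ⟨h1, h2, -⟩ := (hinv i).2 hi
      have h3 := hT3 i hi
      have h0 := hT0 i hi
      fin_cases a
      · change Finsupp.linearCombination F w (M 0 _) = T 0 (w i)
        rw [M0o i hi]
        simp only [map_sub, map_smul, hL, h0]
        match_scalars <;> field_simp <;> ring
      · change Finsupp.linearCombination F w (M 1 _) = T 1 (w i)
        rw [h1, M1o i hi, map_smul, hL]
      · change Finsupp.linearCombination F w (M 2 _) = T 2 (w i)
        rw [h2, M2o i hi]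
        simp only [map_add, map_smul, hL]
        congr 2
        · ring
        · field_simp
      · change Finsupp.linearCombination F w (M 3 _) = T 3 (w i)
        rw [h3, M3o i hi]
        simp only [map_add, map_smul, hL]
        congr 3
        ring
  · rintro ψ ⟨hψ0, hψ⟩
    have key : ∀ i, ψ (mv F i) = w i := by
      intro i
      induction i with
      | zero => rw [hψ0, hw0]
      | succ i ih =>
        rcases Nat.even_or_odd i with hi | hi
        · have h := hψ 2 (mv F i)
          rw [M2e i hi, map_smul, map_sub, ih] at h
          rw [hT2 i hi, ← h]
          match_scalars <;> field_simp <;> ring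
        · have h := hψ 0 (mv F i)
          rw [M0o i hi, map_smul, map_sub, ih] at h
          rw [hT0 i hi, ← h]
          match_scalars <;> field_simp <;> ring
    refine Finsupp.lhom_ext' fun i => LinearMap.ext_ring ?_
    exact (key i).trans (hL i).symm

end DAHA
end

section
/- Let (T0,T1,T2,T3) be a representation of H_q on an F-vector space V, and set X = T3 T0 and Ci = Ti + Ti^{-1} for i = 0,1,2,3. Then the following operator identities hold on V: (1) X T0 - T0 X^{-1} = X C0 - C3; (2) q^{-1} X^{-1} T2 - q T2 X = q^{-1} X^{-1} C2 - C1. -/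
/-!
Only invertibility of the `Tᵢ` and the product relation matter. Writing `X⁻¹ = T₀⁻¹ T₃⁻¹`, both
sides of the first identity expand to `T₃ T₀² - T₃⁻¹`. For the second, cyclically permuting
`T₀ T₁ T₂ T₃ = q⁻¹` gives `T₁ T₂ T₃ T₀ = q⁻¹`, that is `q T₂ X = T₁⁻¹` and, inverting,
`q⁻¹ X⁻¹ T₂⁻¹ = T₁`; substituting these makes the two sides agree.
-/

universe u

namespace DAHA

variable {F : Type*} [Field F]

/-- with `X = T₃ T₀` and `Cᵢ = Tᵢ + Tᵢ⁻¹`, the identities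
`X T₀ - T₀ X⁻¹ = X C₀ - C₃` and `q⁻¹ X⁻¹ T₂ - q T₂ X = q⁻¹ X⁻¹ C₂ - C₁` hold. -/
theorem statement8 (q : F) (hq : q ≠ 0)
    (V : Type u) [AddCommGroup V] [Module F V]
    (T : ZMod 4 → Module.End F V) (hT : IsRep q T) :
    ((T 3 * T 0) * T 0 - T 0 * Ring.inverse (T 3 * T 0)
      = (T 3 * T 0) * (T 0 + Ring.inverse (T 0)) - (T 3 + Ring.inverse (T 3))) ∧
    (q⁻¹ • (Ring.inverse (T 3 * T 0) * T 2) - q • (T 2 * (T 3 * T 0))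
      = q⁻¹ • (Ring.inverse (T 3 * T 0) * (T 2 + Ring.inverse (T 2)))
        - (T 1 + Ring.inverse (T 1))) := by
  obtain ⟨hu, -, hprod⟩ := hT
  obtain ⟨a, ha⟩ := hu 0
  obtain ⟨b, hb⟩ := hu 1
  obtain ⟨c, hc⟩ := hu 2
  obtain ⟨d, hd⟩ := hu 3
  rw [← ha, ← hb, ← hc, ← hd] at hprod ⊢
  have hX : Ring.inverse ((d : Module.End F V) * a) = ↑a⁻¹ * ↑d⁻¹ := by
    rw [← Units.val_mul, Ring.inverse_unit, mul_inv_rev, Units.val_mul]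
  simp only [hX, Ring.inverse_unit]
  -- The product relation conjugated by `T₀`, which is harmless since `q⁻¹` is central.
  have hcyc : (b : Module.End F V) * (c * (d * a)) = q⁻¹ • 1 := by
    calc (b : Module.End F V) * (c * (d * a)) = ↑a⁻¹ * (a * b * c * d) * a := by
          simp [mul_assoc]
      _ = q⁻¹ • 1 := by simp [hprod]
  have hTX : q • ((c : Module.End F V) * (d * a)) = ↑b⁻¹ := by
    rw [← Units.inv_mul_cancel_left b ((c : Module.End F V) * (d * a)), hcyc]
    simp [smul_smul, hq]
  have hXT : q⁻¹ • ((↑a⁻¹ : Module.End F V) * ↑d⁻¹ * ↑c⁻¹) = b := by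
    calc q⁻¹ • ((↑a⁻¹ : Module.End F V) * ↑d⁻¹ * ↑c⁻¹)
        = (q⁻¹ • 1) * ((↑a⁻¹ : Module.End F V) * ↑d⁻¹ * ↑c⁻¹) := by simp
      _ = b := by rw [← hcyc]; simp [mul_assoc]
  constructor
  · simp [mul_add, mul_assoc]
    abel
  · rw [mul_add, smul_add, hTX, hXT]
    abel

end DAHA
end

section
/- Assume F is algebraically closed and q is not a root of unity. If (T0,T1,T2,T3) is an irreducible representation of H_q on a nonzero finite-dimensional F-vector space V, then at least one of the following holds: (1) T3 and T0 have a common eigenvector in V; (2) T1 and T2 have a common eigenvector in V. -/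
/-!
By Schur's lemma each `Tᵢ + Tᵢ⁻¹` is a scalar, so every `Tᵢ` satisfies a quadratic equation
`Tᵢ² = cᵢ Tᵢ - 1`. For two operators `A`, `B` of this kind, `AB + (AB)⁻¹` commutes with `A` and `B`;
hence, if `AB v = l v`, the vector `(AB - l) B v` is killed by `AB - l⁻¹`. Either it is nonzero and
`l⁻¹` is again an eigenvalue of `AB`, or it vanishes, and then `AB` acts as `l` on the `B`-stable
span of `v` and `B v`, where any eigenvector of `B` is a common eigenvector of `A` and `B`
(`common_or_inv`).

Suppose neither pair `(T₃, T₀)`, `(T₁, T₂)` has a common eigenvector. Then the eigenvalues of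
`X = T₃T₀` and those of `Y = T₁T₂` are both stable under inversion. Since `XY = YX = q⁻¹`, an
eigenvalue `l` of `X` yields the eigenvalue `l⁻¹` of `X`, then `q⁻¹ l` and `q l⁻¹` of `Y`, then
`q⁻² l` of `X`. As `q` is not a root of unity, `X` has infinitely many eigenvalues, which
is impossible in finite dimension.
-/

universe u

namespace DAHA

variable {F : Type*} [Field F]

section Helpers

variable {V : Type*} [AddCommGroup V] [Module F V]

/-- If `A` and `B` satisfy quadratic equations `A² = aA - 1` and `B² = bB - 1`, then each
eigenvalue of `AB` has its inverse as an eigenvalue too, unless `A` and `B` share an eigenvector. -/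
lemma common_or_inv [IsAlgClosed F] (A B : Module.End F V) (a b l : F) (hl : l ≠ 0)
    (hA : ∀ v, A (A v) = a • A v - v) (hB : ∀ v, B (B v) = b • B v - v)
    (v : V) (hv : v ≠ 0) (h : A (B v) = l • v) :
    (∃ x : V, x ≠ 0 ∧ (∃ c : F, A x = c • x) ∧ (∃ d : F, B x = d • x)) ∨
    (∃ w : V, w ≠ 0 ∧ A (B w) = l⁻¹ • w) := by
  have hABB : A (B (B v)) = (b * l) • v - A v := by
    rw [hB, map_sub, map_smul, h, smul_smul]
  have hBv : B v = (a * l) • v - l • A v := by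
    have h1 := hA (B v)
    rw [h, map_smul, smul_smul] at h1
    rw [h1]; abel
  have hABA : l • A (B (A v)) = (a * l * l) • v - (b * l) • v + A v := by
    have h1 := congrArg (fun x => A (B x)) hBv
    simp only [map_sub, map_smul, h, hABB, smul_smul] at h1
    rw [eq_sub_iff_add_eq] at h1
    rw [← h1]; abel
  by_cases hw : (b * l) • v - A v - l • B v = 0
  · left
    have hABB' : A (B (B v)) = l • B v := by
      rw [hABB]; exact sub_eq_zero.mp hw
    -- `k` and `b - k` are the roots of the quadratic polynomial of `B`
    obtain ⟨k, hk⟩ : ∃ k : F, k * (b - k) = 1 := by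
      obtain ⟨k, hk⟩ := IsAlgClosed.exists_root
        (Polynomial.X ^ 2 - Polynomial.C b * Polynomial.X + 1 : Polynomial F) (by
          have : (Polynomial.X ^ 2 - Polynomial.C b * Polynomial.X + 1 : Polynomial F).degree = 2 :=
            by compute_degree!
          rw [this]; decide)
      refine ⟨k, ?_⟩
      simp [Polynomial.IsRoot] at hk
      linear_combination -hk
    have key : ∀ (x : V) (c : F), x ≠ 0 → c ≠ 0 → B x = c • x → A (B x) = l • x →
        ∃ x : V, x ≠ 0 ∧ (∃ c : F, A x = c • x) ∧ (∃ d : F, B x = d • x) := by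
      intro x c hx hc hBx hABx
      refine ⟨x, hx, ⟨c⁻¹ * l, ?_⟩, ⟨c, hBx⟩⟩
      rw [hBx, map_smul] at hABx
      rw [mul_smul, ← hABx, inv_smul_smul₀ hc]
    by_cases hx : B v - (b - k) • v = 0
    · exact key v (b - k) hv (right_ne_zero_of_mul_eq_one hk) (sub_eq_zero.mp hx) h
    · refine key _ k hx (left_ne_zero_of_mul_eq_one hk) ?_ ?_
      · rw [map_sub, map_smul, hB, smul_sub, smul_smul, hk]
        module
      · rw [map_sub, map_sub, map_smul, map_smul, hABB', h]
        module
  · refine Or.inr ⟨_, hw, ?_⟩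
    have : l • A (B ((b * l) • v - A v - l • B v)) = (b * l) • v - A v - l • B v := by
      simp only [map_sub, map_smul, h, hABB, smul_sub, hABA]
      simp only [hBv]
      module
    rw [← this, inv_smul_smul₀ hl, this]

/-- Schur's lemma gives each operator of an irreducible representation a quadratic equation. -/
lemma exists_quadratic [IsAlgClosed F] [FiniteDimensional F V] {q : F}
    {T : ZMod 4 → Module.End F V} (hT : IsRep q T) (hirr : Irred T) (i : ZMod 4) :
    ∃ a : F, ∀ v, T i (T i v) = a • T i v - v := by
  obtain ⟨⟨v0, hv0⟩, hW⟩ := hirr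
  have : Nontrivial V := ⟨v0, 0, hv0⟩
  obtain ⟨a, ha⟩ := Module.End.exists_eigenvalue (T i + Ring.inverse (T i))
  refine ⟨a, fun v => ?_⟩
  have htop : Module.End.eigenspace (T i + Ring.inverse (T i)) a = ⊤ := by
    refine (hW _ fun j w hw => ?_).resolve_left ha
    rw [Module.End.mem_eigenspace_iff] at hw ⊢
    have := LinearMap.congr_fun (hT.2.1 i j) w
    simp only [Module.End.mul_apply] at this
    rw [this, hw, map_smul]
  have h : T i v ∈ Module.End.eigenspace (T i + Ring.inverse (T i)) a := htop ▸ Submodule.mem_top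
  rw [Module.End.mem_eigenspace_iff, LinearMap.add_apply, ← Module.End.mul_apply (Ring.inverse _),
    Ring.inverse_mul_cancel _ (hT.1 i), Module.End.one_apply] at h
  exact eq_sub_of_add_eq h

end Helpers

/-- a finite-dimensional irreducible representation of `H_q` admits a
common eigenvector of `T₃, T₀` or a common eigenvector of `T₁, T₂`. -/
theorem statement9 [IsAlgClosed F] (q : F) (hq : q ≠ 0)
    (hroot : ∀ n : ℕ, 1 ≤ n → q ^ n ≠ 1)
    (V : Type u) [AddCommGroup V] [Module F V] [FiniteDimensional F V]
    (T : ZMod 4 → Module.End F V) (hT : IsRep q T) (hirr : Irred T) :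
    (∃ v : V, v ≠ 0 ∧ (∃ a : F, T 3 v = a • v) ∧ (∃ b : F, T 0 v = b • v)) ∨
    (∃ v : V, v ≠ 0 ∧ (∃ a : F, T 1 v = a • v) ∧ (∃ b : F, T 2 v = b • v)) := by
  by_contra hcon
  rw [not_or] at hcon
  obtain ⟨h30, h12⟩ := hcon
  choose c hc using exists_quadratic hT hirr
  obtain ⟨hu, -, hprod⟩ := hT
  have hXY : ∀ v, T 3 (T 0 (T 1 (T 2 v))) = q⁻¹ • v := by
    have : T 3 * T 0 * T 1 * T 2 = q⁻¹ • (1 : Module.End F V) := by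
      refine (hu 3).mul_right_cancel ?_
      calc T 3 * T 0 * T 1 * T 2 * T 3 = T 3 * (T 0 * T 1 * T 2 * T 3) := by
            simp only [mul_assoc]
        _ = _ := by rw [hprod]; simp
    exact fun v => LinearMap.congr_fun this v
  have hYX : ∀ v, T 1 (T 2 (T 3 (T 0 v))) = q⁻¹ • v := by
    have : T 1 * T 2 * T 3 * T 0 = q⁻¹ • (1 : Module.End F V) := by
      refine (hu 0).mul_left_cancel ?_
      calc T 0 * (T 1 * T 2 * T 3 * T 0) = (T 0 * T 1 * T 2 * T 3) * T 0 := by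
            simp only [mul_assoc]
        _ = _ := by rw [hprod]; simp
    exact fun v => LinearMap.congr_fun this v
  have step : ∀ l : F, l ≠ 0 → (∃ v : V, v ≠ 0 ∧ T 3 (T 0 v) = l • v) →
      ∃ v : V, v ≠ 0 ∧ T 3 (T 0 v) = ((q ^ 2)⁻¹ * l) • v := by
    rintro l hl ⟨v, hv, hvl⟩
    obtain ⟨w, hw, hwl⟩ :=
      (common_or_inv _ _ _ _ l hl (hc 3) (hc 0) v hv hvl).resolve_left h30
    have hwY : T 1 (T 2 w) = (q⁻¹ * l) • w := by
      have h := hYX w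
      rw [hwl, map_smul, map_smul] at h
      rw [mul_comm, mul_smul, ← h, smul_inv_smul₀ hl]
    have hql : q⁻¹ * l ≠ 0 := mul_ne_zero (inv_ne_zero hq) hl
    obtain ⟨x, hx, hxl⟩ :=
      (common_or_inv _ _ _ _ _ hql (hc 1) (hc 2) w hw hwY).resolve_left h12
    refine ⟨x, hx, ?_⟩
    have h := hXY x
    rw [hxl, map_smul, map_smul] at h
    have e1 : (q ^ 2)⁻¹ * l = (q⁻¹ * l) * q⁻¹ := by rw [pow_two, mul_inv]; ring
    rw [e1, mul_smul, ← h, smul_inv_smul₀ hql]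
  obtain ⟨v0, hv0⟩ := hirr.1
  have : Nontrivial V := ⟨v0, 0, hv0⟩
  obtain ⟨l, hl⟩ := Module.End.exists_eigenvalue (T 3 * T 0)
  obtain ⟨v, hvl, hv⟩ := hl.exists_hasEigenvector
  rw [Module.End.mem_eigenspace_iff, Module.End.mul_apply] at hvl
  have hl0 : l ≠ 0 := by
    rintro rfl
    have h := hYX v
    rw [hvl, zero_smul, map_zero, map_zero] at h
    exact smul_ne_zero (inv_ne_zero hq) hv h.symm
  have hq2 : (q ^ 2)⁻¹ ≠ 0 := inv_ne_zero (pow_ne_zero 2 hq)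
  have hall : ∀ n : ℕ, ∃ v : V, v ≠ 0 ∧ T 3 (T 0 v) = (((q ^ 2)⁻¹) ^ n * l) • v := by
    intro n
    induction n with
    | zero => exact ⟨v, hv, by simpa using hvl⟩
    | succ n ih =>
      have := step _ (mul_ne_zero (pow_ne_zero n hq2) hl0) ih
      rwa [← mul_assoc, ← pow_succ'] at this
  have hinj : Function.Injective fun n : ℕ => ((q ^ 2)⁻¹) ^ n * l := by
    intro m n hmn
    have h1 : (q ^ 2) ^ m = (q ^ 2) ^ n := by
      simpa only [inv_pow, inv_inj] using mul_right_cancel₀ hl0 hmn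
    rw [← pow_mul, ← pow_mul] at h1
    wlog hlt : m < n generalizing m n
    · rcases (not_lt.mp hlt).eq_or_lt with h | h
      · exact h.symm
      · exact (this hmn.symm h1.symm h).symm
    refine absurd ?_ (hroot (2 * n - 2 * m) (by omega))
    refine mul_left_cancel₀ (pow_ne_zero (2 * m) hq) ?_
    rw [← pow_add, mul_one, h1]
    congr 1
    omega
  refine Set.infinite_of_injective_forall_mem hinj (fun n => ?_)
    (Module.End.finite_hasEigenvalue (T 3 * T 0))
  obtain ⟨x, hx, hxl⟩ := hall n
  exact Module.End.hasEigenvalue_of_hasEigenvector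
    ⟨Module.End.mem_eigenspace_iff.mpr hxl, hx⟩


end DAHA
end
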